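/- arXiv:1802.03814 — 2 statements merged into one kernel-verified Lean document; each statement's English description precedes it below -/
import Mathlib

section
/- Suppose $f$ is a smooth function on a neighborhood of the origin in $\mathbf{R}^n$ with $f(0)=0$ and $\nabla f(0)=0$, whose Taylor expansion at the origin does not vanish identically, and that either $f$ is real-analytic or $f$ is smooth with Newton polyhedron intersecting each coordinate axis. Then there is a neighborhood $U$ of the origin and constants $K$ and $\eta>0$ such that any dyadic rectangle $R\subset U$ (with side length $2^{-k_i}$ in the $x_i$ direction) may be divided into at most $K$ rectangles $R_j$ such that for each $R_j$ there exist an integer $a$ and a single vector $y=(y_1,\dots,y_n)$ with $|y_i|\le 2^{-k_i}$ for all $i$, such that $|(y\cdot\nabla)^a f(\mathbf{x})| \ge \eta\, \sup_{R_j} f^*$ for all $\mathbf{x}\in R_j$. Moreover, for each $j$ one can arrange either that $0\le a\le o(f)$ or that $2\le a\le\max(2,o(f))$. -/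
open MeasureTheory Real Filter Topology Set
open scoped ENNReal

noncomputable section

namespace Paper

variable {n m : ℕ}

/-- The monomial `t ^ α`. -/
def monomial (α : Fin n → ℕ) (t : Fin n → ℝ) : ℝ := ∏ i, t i ^ α i

/-- `S` is real-analytic near the origin with Taylor coefficient family `c`:
its Taylor series at the origin converges to it near `0`. -/
def HasTaylorSeriesAtOrigin (S : (Fin n → ℝ) → ℝ) (c : (Fin n → ℕ) → ℝ) : Prop :=
  ∀ᶠ t in 𝓝 (0 : Fin n → ℝ), HasSum (fun α => c α * monomial α t) (S t)

/-- The Newton polyhedron of the Taylor coefficient family `c`: the convex hull of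
the octants above the exponents of the nonzero coefficients. -/
def newtonPolyhedron (c : (Fin n → ℕ) → ℝ) : Set (Fin n → ℝ) :=
  convexHull ℝ {x : Fin n → ℝ | ∃ α : Fin n → ℕ, c α ≠ 0 ∧ ∀ i, (α i : ℝ) ≤ x i}

/-- The vertices (extreme points) of the Newton polyhedron. -/
def newtonVertices (c : (Fin n → ℕ) → ℝ) : Set (Fin n → ℝ) :=
  Set.extremePoints ℝ (newtonPolyhedron c)

/-- `f^*`, the sum of the absolute values of the vertex monomials. -/
def starFn (c : (Fin n → ℕ) → ℝ) (t : Fin n → ℝ) : ℝ :=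
  ∑' v : newtonVertices c, ∏ i, |t i| ^ ((v : Fin n → ℝ) i)

/-- Compact (exposed) faces of the Newton polyhedron; a vertex is a face of dimension zero. -/
def IsCompactFace (c : (Fin n → ℕ) → ℝ) (F : Set (Fin n → ℝ)) : Prop :=
  IsExposed ℝ (newtonPolyhedron c) F ∧ F.Nonempty ∧ IsCompact F

/-- The face polynomial `f_F(t) = ∑_{α ∈ F} f_α t^α`. -/
def facePoly (c : (Fin n → ℕ) → ℝ) (F : Set (Fin n → ℝ)) (t : Fin n → ℝ) : ℝ :=
  ∑' α : {α : Fin n → ℕ // (fun i => (α i : ℝ)) ∈ F}, c α.1 * monomial α.1 t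

/-- The order of vanishing of `g` at `x`. -/
def vanishingOrder (g : (Fin n → ℝ) → ℝ) (x : Fin n → ℝ) : ℕ∞ :=
  sSup {k : ℕ∞ | ∀ j : ℕ, (j : ℕ∞) < k → iteratedFDeriv ℝ j g x = 0}

/-- `o(f)`: the maximum order of a zero of a compact face polynomial on `(ℝ ∖ {0})^n`
(`0` if there are no such zeroes). -/
def newtonOrder (c : (Fin n → ℕ) → ℝ) : ℕ∞ :=
  sSup {k : ℕ∞ | ∃ F : Set (Fin n → ℝ), IsCompactFace c F ∧
    ∃ x : Fin n → ℝ, (∀ i, x i ≠ 0) ∧ facePoly c F x = 0 ∧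
      k ≤ vanishingOrder (facePoly c F) x}

/-- The Euclidean norm `|t_k|` of the `k`-th group of variables. -/
def grpNorm (grp : Fin n → Fin m) (k : Fin m) (t : Fin n → ℝ) : ℝ :=
  Real.sqrt (∑ i ∈ Finset.univ.filter (fun i => grp i = k), t i ^ 2)

/-- The weight `∏_k |t_k|^{-α_k}`. -/
def kernelWeight (grp : Fin n → Fin m) (a : Fin m → ℝ) (t : Fin n → ℝ) : ℝ :=
  ∏ k, grpNorm grp k t ^ (-(a k))

/-- The measure `dμ = ∏_k |t_k|^{-α_k} dm`, `m` being Lebesgue measure. -/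
def fracMeasure (grp : Fin n → Fin m) (a : Fin m → ℝ) : Measure (Fin n → ℝ) :=
  volume.withDensity fun t => ENNReal.ofReal (kernelWeight grp a t)

/-- The characterization (1.5) of the sublevel growth exponents `a₀`, `d₀`. -/
def IsSublevelExponent (grp : Fin n → Fin m) (a : Fin m → ℝ) (c : (Fin n → ℕ) → ℝ)
    (a₀ : ℝ) (d₀ : ℕ) : Prop :=
  0 < a₀ ∧ d₀ ≤ n - 1 ∧ ∃ r₀ > (0 : ℝ), ∀ r : ℝ, 0 < r → r < r₀ →
    ∃ b B : ℝ, 0 < b ∧ 0 < B ∧ ∀ ε : ℝ, 0 < ε → ε < 1/2 →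
      ENNReal.ofReal (b * ε ^ a₀ * |Real.log ε| ^ d₀) <
          fracMeasure grp a {t | (∀ i, t i ∈ Set.Ioo 0 r) ∧ starFn c t < ε} ∧
        fracMeasure grp a {t | (∀ i, t i ∈ Set.Ioo 0 r) ∧ starFn c t < ε} <
          ENNReal.ofReal (B * ε ^ a₀ * |Real.log ε| ^ d₀)

/-- The kernel bounds (1.2a)-(1.2b): `K` is `C¹` off the coordinate hyperplanes,
`|K(t)| ≤ C ∏_k |t_k|^{-α_k}` and `|∂_{t_i} K(t)| ≤ C |t_i|⁻¹ ∏_k |t_k|^{-α_k}`. -/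
def KernelBounds (grp : Fin n → Fin m) (a : Fin m → ℝ) (K : (Fin n → ℝ) → ℝ) : Prop :=
  ContDiffOn ℝ 1 K {t | ∀ i, t i ≠ 0} ∧
  ∃ C : ℝ, ∀ t : Fin n → ℝ, (∀ i, t i ≠ 0) →
    |K t| ≤ C * kernelWeight grp a t ∧
    ∀ i : Fin n, |fderiv ℝ K t (Pi.single i 1)| ≤ C / |t i| * kernelWeight grp a t

/-- The averaging operator (1.1),
`Tf(x, x_{n+1}) = ∫ f(x - t, x_{n+1} - S(t)) K(t) dt`. -/
def radonOp (S K : (Fin n → ℝ) → ℝ) (f : (Fin (n+1) → ℝ) → ℂ) :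
    (Fin (n+1) → ℝ) → ℂ :=
  fun x => ∫ t : Fin n → ℝ, (K t : ℂ) * f (fun j => x j - Fin.snoc (α := fun _ => ℝ) t (S t) j)

/-- The Fourier transform on `ℝ^N`. -/
def fourierTransform {N : ℕ} (g : (Fin N → ℝ) → ℂ) (ξ : Fin N → ℝ) : ℂ :=
  ∫ x : Fin N → ℝ,
    Complex.exp (-2 * (Real.pi : ℂ) * Complex.I * ((∑ i, x i * ξ i : ℝ) : ℂ)) * g x

/-- The inverse Fourier transform on `ℝ^N`. -/
def fourierInv {N : ℕ} (g : (Fin N → ℝ) → ℂ) (x : Fin N → ℝ) : ℂ :=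
  ∫ ξ : Fin N → ℝ,
    Complex.exp (2 * (Real.pi : ℂ) * Complex.I * ((∑ i, x i * ξ i : ℝ) : ℂ)) * g ξ

/-- The Bessel potential `(I - Δ)^{β/2} g`, defined via the Fourier transform. -/
def besselPotential {N : ℕ} (β : ℝ) (g : (Fin N → ℝ) → ℂ) : (Fin N → ℝ) → ℂ :=
  fun x => fourierInv
    (fun ξ => (((1 + ∑ i, ξ i ^ 2) ^ (β / 2) : ℝ) : ℂ) * fourierTransform g ξ) x

/-- `T` is bounded from `L^p(ℝ^N)` to the `L^p` Sobolev space `L^p_β(ℝ^N)`,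
whose norm is `‖(I - Δ)^{β/2} f‖_{L^p}`. -/
def BddLpSobolev {N : ℕ} (p β : ℝ)
    (T : ((Fin N → ℝ) → ℂ) → ((Fin N → ℝ) → ℂ)) : Prop :=
  ∃ C : ℝ, 0 ≤ C ∧ ∀ f : SchwartzMap (Fin N → ℝ) ℂ,
    eLpNorm (besselPotential β (T ⇑f)) (ENNReal.ofReal p) volume ≤
      ENNReal.ofReal C * eLpNorm (⇑f) (ENNReal.ofReal p) volume

/-- `min(|t₁|,...,|tₙ|, S^*(t))`. -/
def minFactor (c : (Fin n → ℕ) → ℝ) (t : Fin n → ℝ) : ℝ :=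
  min (⨅ i, |t i|) (starFn c t)

/-- The analytic family (3.1):
`T_z f(x) = e^{z²} ∫ (min(|t₁|,...,|tₙ|,S^*(t)))^z f(x - t, x_{n+1} - S(t)) K(t) dt`. -/
def radonOpZ (S K : (Fin n → ℝ) → ℝ) (c : (Fin n → ℕ) → ℝ) (z : ℂ)
    (f : (Fin (n+1) → ℝ) → ℂ) : (Fin (n+1) → ℝ) → ℂ :=
  fun x => Complex.exp (z ^ 2) *
    ∫ t : Fin n → ℝ,
      ((minFactor c t : ℂ) ^ z) * (K t : ℂ) * f (fun j => x j - Fin.snoc (α := fun _ => ℝ) t (S t) j)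

/-- The Fourier transform (3.8) of the convolution kernel `ν_z` of `T_z`. -/
def nuHatZ (S K : (Fin n → ℝ) → ℝ) (c : (Fin n → ℕ) → ℝ) (z : ℂ)
    (lam : Fin (n+1) → ℝ) : ℂ :=
  Complex.exp (z ^ 2) *
    ∫ t : Fin n → ℝ,
      Complex.exp (Complex.I *
          (((∑ i, lam i.castSucc * t i) + lam (Fin.last n) * S t : ℝ) : ℂ)) *
        ((minFactor c t : ℂ) ^ z) * (K t : ℂ)


/-- `c` is the (possibly non-convergent) Taylor coefficient family of the smooth
function `f` at the origin, in the sense of Peano remainders. -/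
def IsTaylorSeriesAt (f : (Fin n → ℝ) → ℝ) (c : (Fin n → ℕ) → ℝ) : Prop :=
  ∀ N : ℕ,
    (fun x : Fin n → ℝ => f x -
        ∑ α ∈ (Fintype.piFinset fun _ : Fin n => Finset.range (N + 1)).filter
          (fun α => ∑ i, α i ≤ N), c α * monomial α x)
      =o[𝓝 (0 : Fin n → ℝ)] fun x => ‖x‖ ^ N

/-- The dyadic rectangle `∏_i ±[2^{-k_i-1}, 2^{-k_i}]`, the sign in the `i`-th
coordinate being determined by `σ i`. -/
def dyadicRect (k : Fin n → ℤ) (σ : Fin n → Bool) : Set (Fin n → ℝ) :=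
  Set.univ.pi fun i =>
    if σ i then Set.Icc ((2 : ℝ) ^ (-(k i) - 1)) ((2 : ℝ) ^ (-(k i)))
    else Set.Icc (-((2 : ℝ) ^ (-(k i)))) (-((2 : ℝ) ^ (-(k i) - 1)))

/-- An axis-parallel closed rectangle. -/
def boxOf (lo hi : Fin n → ℝ) : Set (Fin n → ℝ) :=
  Set.univ.pi fun i => Set.Icc (lo i) (hi i)

/-! ### Generic calculus lemmas -/

lemma natCast_le_top (k : ℕ) : ((k : ℕ) : WithTop ℕ∞) ≤ ((⊤ : ℕ∞) : WithTop ℕ∞) := by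
  exact_mod_cast (le_top : (k : ℕ∞) ≤ ⊤)

lemma exists_diag_ne_zero {P : (Fin n → ℝ) → ℝ} {x : Fin n → ℝ} {a : ℕ}
    (hP : ContDiffAt ℝ (⊤ : WithTop ℕ∞) P x) (h : iteratedFDeriv ℝ a P x ≠ 0) :
    ∃ z : Fin n → ℝ, (∀ i, |z i| ≤ 1) ∧ iteratedFDeriv ℝ a P x (fun _ => z) ≠ 0 := by
  by_contra hcon
  push Not at hcon
  apply h
  set B := iteratedFDeriv ℝ a P x with hB
  have hdiag : ∀ z : Fin n → ℝ, B (fun _ => z) = 0 := by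
    intro z
    set t : ℝ := (‖z‖ + 1)⁻¹ with ht
    have htpos : 0 < t := by positivity
    have h1 := hcon (t • z) (fun i => by
      have := norm_le_pi_norm z i
      rw [Real.norm_eq_abs] at this
      simp only [Pi.smul_apply, smul_eq_mul, abs_mul, abs_of_pos htpos]
      rw [ht, inv_mul_le_iff₀ (by positivity)]
      linarith)
    have h2 := B.map_smul_univ (fun _ => t) (fun _ => z)
    rw [h1] at h2
    simp only [Finset.prod_const, smul_eq_mul] at h2
    have : t ^ (Finset.univ : Finset (Fin a)).card ≠ 0 := pow_ne_zero _ htpos.ne'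
    exact (mul_eq_zero.mp h2.symm).resolve_left this
  ext v
  have h3 := B.iteratedFDeriv_comp_diagonal 0 v
  have h4 : (fun x => B fun _ => x) = fun _ => (0 : ℝ) := funext hdiag
  rw [h4] at h3
  have h5 : ∀ σ : Equiv.Perm (Fin a), B (fun i => v (σ i)) = B v := fun σ =>
    hP.iteratedFDeriv_comp_perm v σ
  simp only [h5, Finset.sum_const, nsmul_eq_mul] at h3
  have h6 : iteratedFDeriv ℝ a (fun _ : Fin n → ℝ => (0 : ℝ)) 0 = 0 := by
    simp
  rw [h6] at h3
  simp only [zero_apply] at h3 ⊢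
  have h7 : ((Finset.univ : Finset (Equiv.Perm (Fin a))).card : ℝ) ≠ 0 := by
    simp [Fintype.card_perm, Nat.factorial_ne_zero]
  exact (mul_eq_zero.mp h3.symm).resolve_left h7

/-- A Landau-type inequality: decay of a `C²` function implies (weaker) decay of its derivative. -/
lemma landau {E F : Type*} [NormedAddCommGroup E] [NormedSpace ℝ E]
    [NormedAddCommGroup F] [NormedSpace ℝ F]
    {g : E → F} (hg : ContDiffAt ℝ 2 g 0) {p : ℕ} (hp : 1 ≤ p) {C : ℝ}
    (h : ∀ᶠ x in 𝓝 (0 : E), ‖g x‖ ≤ C * ‖x‖ ^ (2 * p)) :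
    ∃ C', ∀ᶠ x in 𝓝 (0 : E), ‖fderiv ℝ g x‖ ≤ C' * ‖x‖ ^ p := by
  -- the derivative is Lipschitz near zero
  have h1 : ContDiffAt ℝ 1 (fderiv ℝ g) 0 := hg.fderiv_right (by norm_num)
  obtain ⟨M, t, ht, hLip⟩ := h1.exists_lipschitzOnWith
  have h2 : ∀ᶠ x in 𝓝 (0 : E), DifferentiableAt ℝ g x := by
    have := hg.eventually (by simp)
    filter_upwards [this] with x hx
    exact hx.differentiableAt (by simp)
  obtain ⟨ρ, hρ, hball⟩ := Metric.eventually_nhds_iff_ball.mp (h.and (h2.and ht))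
  have hC : ∀ x ∈ Metric.ball (0 : E) ρ, x ≠ 0 → 0 ≤ C := by
    intro x hx hx0
    have := (hball x hx).1
    have h3 : 0 < ‖x‖ ^ (2 * p) := by positivity
    by_contra hneg
    push Not at hneg
    have := (norm_nonneg (g x)).trans this
    nlinarith
  refine ⟨C * 2 ^ (2 * p) + C + M, ?_⟩
  have hρ' : 0 < min (ρ / 2) 1 := by positivity
  filter_upwards [Metric.ball_mem_nhds (0 : E) hρ'] with x hx
  rw [mem_ball_zero_iff, lt_min_iff] at hx
  by_cases hx0 : x = 0
  · subst hx0
    have hlo : g =o[𝓝 0] fun x => ‖x‖ := by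
      have hO : g =O[𝓝 0] fun x : E => ‖x‖ ^ (2 * p) := by
        refine Asymptotics.IsBigO.of_bound C ?_
        filter_upwards [h] with y hy
        simpa using hy
      refine hO.trans_isLittleO ?_
      have := (Asymptotics.isLittleO_pow_id (𝕜 := ℝ) (n := 2 * p) (by lia)).comp_tendsto
        (tendsto_norm_zero (E := E))
      simpa [Function.comp_def] using this
    have hg0 : g 0 = 0 := by
      have := (hball 0 (Metric.mem_ball_self hρ)).1
      rw [norm_zero, zero_pow (by lia), mul_zero] at this
      exact norm_le_zero_iff.mp this
    have hd : HasFDerivAt g (0 : E →L[ℝ] F) 0 := by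
      rw [hasFDerivAt_iff_isLittleO_nhds_zero]
      simpa [hg0] using hlo.of_norm_right
    rw [hd.fderiv]
    simp [zero_pow (show p ≠ 0 by lia)]
  have hxn : 0 < ‖x‖ := norm_pos_iff.mpr hx0
  set τ := ‖x‖ ^ p with hτ
  have hτpos : 0 < τ := by positivity
  have hτle : τ ≤ ‖x‖ := by
    calc τ = ‖x‖ ^ p := rfl
      _ ≤ ‖x‖ ^ 1 := pow_le_pow_of_le_one hxn.le hx.2.le hp
      _ = ‖x‖ := pow_one _
  have hC0 : 0 ≤ C := hC x (by rw [mem_ball_zero_iff]; linarith) hx0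
  have hM0 : (0 : ℝ) ≤ M := M.2
  refine ContinuousLinearMap.opNorm_le_of_unit_norm (by positivity) ?_
  intro v hv
  have hyx : ‖(x + τ • v) - x‖ = τ := by
    rw [add_sub_cancel_left, norm_smul, hv, mul_one, Real.norm_of_nonneg hτpos.le]
  have hynorm : ‖x + τ • v‖ ≤ 2 * ‖x‖ := by
    calc ‖x + τ • v‖ ≤ ‖x‖ + ‖τ • v‖ := norm_add_le _ _
      _ = ‖x‖ + τ := by rw [norm_smul, hv, mul_one, Real.norm_of_nonneg hτpos.le]
      _ ≤ 2 * ‖x‖ := by linarith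
  have hseg : segment ℝ x (x + τ • v) ⊆ Metric.ball 0 ρ := by
    refine (convex_ball (0 : E) ρ).segment_subset ?_ ?_
    · rw [mem_ball_zero_iff]; linarith
    · rw [mem_ball_zero_iff]; linarith
  have hxb : x ∈ Metric.ball (0 : E) ρ := by rw [mem_ball_zero_iff]; linarith
  have hyb : x + τ • v ∈ Metric.ball (0 : E) ρ := by rw [mem_ball_zero_iff]; linarith
  have hmv : ‖g (x + τ • v) - g x - fderiv ℝ g x ((x + τ • v) - x)‖
      ≤ (M * τ) * ‖(x + τ • v) - x‖ := by
    refine (convex_segment x (x + τ • v)).norm_image_sub_le_of_norm_hasFDerivWithin_le'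
      (f := g) (f' := fderiv ℝ g) (s := segment ℝ x (x + τ • v)) ?_ ?_ ?_ ?_
    · intro y hy
      exact ((hball y (hseg hy)).2.1).hasFDerivAt.hasFDerivWithinAt
    · intro y hy
      have := hLip.norm_sub_le (hball y (hseg hy)).2.2 (hball x hxb).2.2
      refine this.trans ?_
      gcongr
      rw [segment_eq_image'] at hy
      obtain ⟨θ, hθ, rfl⟩ := hy
      rw [add_sub_cancel_left, add_sub_cancel_left, norm_smul, norm_smul, hv, mul_one,
        Real.norm_of_nonneg hτpos.le, Real.norm_of_nonneg hθ.1]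
      nlinarith [hθ.2]
    · exact left_mem_segment ℝ _ _
    · exact right_mem_segment ℝ _ _
  rw [hyx, add_sub_cancel_left] at hmv
  have hgx := (hball x hxb).1
  have hgy := (hball _ hyb).1
  have hgy' : ‖g (x + τ • v)‖ ≤ C * 2 ^ (2 * p) * τ ^ 2 := by
    refine hgy.trans ?_
    have : ‖x + τ • v‖ ^ (2 * p) ≤ (2 * ‖x‖) ^ (2 * p) := by gcongr
    calc C * ‖x + τ • v‖ ^ (2 * p) ≤ C * (2 * ‖x‖) ^ (2 * p) := by gcongr
      _ = C * 2 ^ (2 * p) * τ ^ 2 := by rw [hτ, mul_pow, ← pow_mul, mul_comm p 2]; ring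
  have hgx' : ‖g x‖ ≤ C * τ ^ 2 := by
    refine hgx.trans (le_of_eq ?_)
    rw [hτ, ← pow_mul, mul_comm p 2]
  have hkey : ‖fderiv ℝ g x (τ • v)‖ ≤ (C * 2 ^ (2 * p) + C + M) * τ ^ 2 := by
    have e : fderiv ℝ g x (τ • v) = g (x + τ • v) - g x -
      (g (x + τ • v) - g x - fderiv ℝ g x (τ • v)) := by abel
    rw [e]
    refine (norm_sub_le _ _).trans ?_
    have := norm_sub_le (g (x + τ • v)) (g x)
    nlinarith
  rw [map_smul, norm_smul, Real.norm_of_nonneg hτpos.le] at hkey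
  have : τ * ‖fderiv ℝ g x v‖ ≤ τ * ((C * 2 ^ (2 * p) + C + M) * τ) := by
    nlinarith
  exact le_of_mul_le_mul_left this hτpos

/-- Fast decay of a smooth function gives decay of its derivatives. -/
lemma decay_iterated {g : (Fin n → ℝ) → ℝ} (hg : ContDiffAt ℝ (⊤ : ℕ∞) g 0) {p : ℕ} (hp : 1 ≤ p) :
    ∀ a : ℕ, ∀ q : ℕ, (∃ C, ∀ᶠ x in 𝓝 (0 : Fin n → ℝ), ‖g x‖ ≤ C * ‖x‖ ^ (2 ^ a * (2 ^ q * p))) →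
      ∃ C, ∀ᶠ x in 𝓝 (0 : Fin n → ℝ), ‖iteratedFDeriv ℝ a g x‖ ≤ C * ‖x‖ ^ (2 ^ q * p) := by
  intro a
  induction a with
  | zero =>
    intro q ⟨C, hC⟩
    refine ⟨C, ?_⟩
    filter_upwards [hC] with x hx
    simpa using hx
  | succ a ih =>
    intro q ⟨C, hC⟩
    obtain ⟨C', hC'⟩ := ih (q + 1) ⟨C, by
      filter_upwards [hC] with x hx
      rwa [show 2 ^ a * (2 ^ (q + 1) * p) = 2 ^ (a + 1) * (2 ^ q * p) by ring]⟩
    have hs : ContDiffAt ℝ 2 (iteratedFDeriv ℝ a g) 0 := by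
      have : ContDiffAt ℝ ((2 + a : ℕ) : WithTop ℕ∞) g 0 := hg.of_le (natCast_le_top _)
      exact this.iteratedFDeriv_right (by norm_cast)
    obtain ⟨D, hD⟩ := landau hs (p := 2 ^ q * p) (Nat.one_le_iff_ne_zero.mpr (by positivity))
      (C := C') (by
        filter_upwards [hC'] with x hx
        rwa [show 2 * (2 ^ q * p) = 2 ^ (q + 1) * p by ring])
    refine ⟨D, ?_⟩
    filter_upwards [hD] with x hx
    rwa [← norm_fderiv_iteratedFDeriv]

/-! ### Scaling, and `C^m`-small families -/

/-- Coordinatewise scaling as a continuous linear equivalence. -/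
def scaleL (s : Fin n → ℝ) (hs : ∀ i, s i ≠ 0) : (Fin n → ℝ) ≃L[ℝ] (Fin n → ℝ) :=
  ContinuousLinearEquiv.piCongrRight fun i =>
    ContinuousLinearEquiv.unitsEquivAut ℝ (Units.mk0 (s i) (hs i))

lemma scaleL_apply (s : Fin n → ℝ) (hs : ∀ i, s i ≠ 0) (u : Fin n → ℝ) :
    scaleL s hs u = s * u := by
  ext i
  simp [scaleL, mul_comm]

lemma iteratedFDeriv_scale (s : Fin n → ℝ) (hs : ∀ i, s i ≠ 0) (g : (Fin n → ℝ) → ℝ)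
    (u : Fin n → ℝ) (a : ℕ) :
    iteratedFDeriv ℝ a (fun v => g (s * v)) u =
      (iteratedFDeriv ℝ a g (s * u)).compContinuousLinearMap
        fun _ => ((scaleL s hs : (Fin n → ℝ) ≃L[ℝ] (Fin n → ℝ)) : (Fin n → ℝ) →L[ℝ] (Fin n → ℝ)) := by
  have h := (scaleL s hs).iteratedFDerivWithin_comp_right g (s := univ) uniqueDiffOn_univ
    (x := u) (mem_univ _) a
  simp only [preimage_univ, iteratedFDerivWithin_univ] at h
  have e : (fun v => g (s * v)) = g ∘ (scaleL s hs) := by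
    ext v; simp [scaleL_apply]
  rw [e, h, scaleL_apply]

lemma iteratedFDeriv_scale_apply (s : Fin n → ℝ) (hs : ∀ i, s i ≠ 0) (g : (Fin n → ℝ) → ℝ)
    (u z : Fin n → ℝ) (a : ℕ) :
    iteratedFDeriv ℝ a (fun v => g (s * v)) u (fun _ => z) =
      iteratedFDeriv ℝ a g (s * u) (fun _ => s * z) := by
  rw [iteratedFDeriv_scale s hs]
  simp [scaleL_apply]

lemma norm_iteratedFDeriv_scale_le (s : Fin n → ℝ) (hs : ∀ i, s i ≠ 0) (g : (Fin n → ℝ) → ℝ)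
    (u : Fin n → ℝ) (a : ℕ) :
    ‖iteratedFDeriv ℝ a (fun v => g (s * v)) u‖ ≤ ‖iteratedFDeriv ℝ a g (s * u)‖ * ‖s‖ ^ a := by
  rw [iteratedFDeriv_scale s hs]
  refine (ContinuousMultilinearMap.norm_compContinuousLinearMap_le _ _).trans ?_
  gcongr
  rw [Finset.prod_const, Finset.card_univ, Fintype.card_fin]
  gcongr
  refine ContinuousLinearMap.opNorm_le_bound _ (norm_nonneg _) ?_
  intro x
  simp only [ContinuousLinearEquiv.coe_coe, scaleL_apply]
  exact norm_mul_le _ _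

lemma contDiffAt_scale {s : Fin n → ℝ} {g : (Fin n → ℝ) → ℝ} {u : Fin n → ℝ} {k : WithTop ℕ∞}
    (h : ContDiffAt ℝ k g (s * u)) : ContDiffAt ℝ k (fun v => g (s * v)) u := by
  refine ContDiffAt.comp u (g := g) (f := fun v => s * v) h ?_
  exact (contDiff_const.mul contDiff_id).contDiffAt

lemma eventually_scale {ι : Type*} {l : Filter ι} {s : ι → Fin n → ℝ} (hs : Tendsto s l (𝓝 0))
    {p : (Fin n → ℝ) → Prop} (hp : ∀ᶠ x in 𝓝 0, p x) :
    ∀ᶠ i in l, ∀ u ∈ Metric.ball (0 : Fin n → ℝ) 2, p (s i * u) := by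
  obtain ⟨ρ, hρ, hball⟩ := Metric.eventually_nhds_iff_ball.mp hp
  have := hs.eventually (Metric.ball_mem_nhds (0 : Fin n → ℝ) (half_pos hρ))
  filter_upwards [this] with i hi u hu
  apply hball
  rw [dist_zero_right] at hi
  rw [mem_ball_zero_iff] at hu ⊢
  refine (norm_mul_le _ _).trans_lt ?_
  nlinarith [norm_nonneg (s i), norm_nonneg u]

/-- The family `φ` tends to zero in `C^m` on the ball of radius `2`. -/
def Small {ι : Type*} (m : ℕ) (l : Filter ι) (φ : ι → (Fin n → ℝ) → ℝ) : Prop :=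
  (∀ᶠ i in l, ∀ u ∈ Metric.ball (0 : Fin n → ℝ) 2, ContDiffAt ℝ m (φ i) u) ∧
  ∀ a ≤ m, ∀ ε > 0, ∀ᶠ i in l, ∀ u ∈ Metric.ball (0 : Fin n → ℝ) 2,
    ‖iteratedFDeriv ℝ a (φ i) u‖ ≤ ε

lemma Small.add {ι : Type*} {l : Filter ι} {φ ψ : ι → (Fin n → ℝ) → ℝ}
    (h1 : Small m l φ) (h2 : Small m l ψ) : Small m l (fun i u => φ i u + ψ i u) := by
  refine ⟨?_, ?_⟩
  · filter_upwards [h1.1, h2.1] with i hi hi' u hu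
    exact (hi u hu).add (hi' u hu)
  · intro a ha ε hε
    filter_upwards [h1.1, h2.1, h1.2 a ha (ε / 2) (by positivity),
      h2.2 a ha (ε / 2) (by positivity)] with i hi hi' h3 h4 u hu
    have e : (fun u => φ i u + ψ i u) = φ i + ψ i := rfl
    have hc : (a : WithTop ℕ∞) ≤ (m : WithTop ℕ∞) := by exact_mod_cast ha
    rw [e, iteratedFDeriv_add_apply ((hi u hu).of_le hc) ((hi' u hu).of_le hc)]
    refine (norm_add_le _ _).trans ?_
    linarith [h3 u hu, h4 u hu]

lemma Small.sum {ι κ : Type*} {l : Filter ι} {φ : κ → ι → (Fin n → ℝ) → ℝ} (S : Finset κ)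
    (h : ∀ k ∈ S, Small m l (φ k)) : Small m l (fun i u => ∑ k ∈ S, φ k i u) := by
  classical
  induction S using Finset.induction_on with
  | empty =>
    refine ⟨Eventually.of_forall fun i u _ => by simpa using contDiffAt_const, ?_⟩
    intro a ha ε hε
    refine Eventually.of_forall fun i u _ => ?_
    simp [hε.le]
  | insert k S hk ih =>
    simp only [Finset.sum_insert hk]
    exact (h k (Finset.mem_insert_self _ _)).add
      (ih fun k' hk' => h k' (Finset.mem_insert_of_mem hk'))

lemma Small.mul_fixed {ι : Type*} {l : Filter ι} {φ : ι → (Fin n → ℝ) → ℝ}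
    (h : Small m l φ) {ψ : (Fin n → ℝ) → ℝ} (hψ : ContDiff ℝ (⊤ : ℕ∞) ψ) :
    Small m l (fun i u => φ i u * ψ u) := by
  refine ⟨?_, ?_⟩
  · filter_upwards [h.1] with i hi u hu
    exact (hi u hu).mul (hψ.contDiffAt.of_le (natCast_le_top m))
  · intro a ha ε hε
    have hB : ∀ j : ℕ, ∃ C, ∀ u ∈ Metric.ball (0 : Fin n → ℝ) 2, ‖iteratedFDeriv ℝ j ψ u‖ ≤ C := by
      intro j
      obtain ⟨C, hC⟩ := (isCompact_closedBall (0 : Fin n → ℝ) 2).exists_bound_of_continuousOn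
        (hψ.continuous_iteratedFDeriv (m := j) (natCast_le_top j)).continuousOn
      exact ⟨C, fun u hu => hC u (Metric.ball_subset_closedBall hu)⟩
    choose C hC using hB
    set T : ℝ := ∑ i ∈ Finset.range (a + 1), (a.choose i : ℝ) * |C (a - i)| with hT
    have hT0 : 0 ≤ T := Finset.sum_nonneg fun i _ => by positivity
    have hall : ∀ᶠ i in l, ∀ j ∈ Finset.range (a + 1), ∀ u ∈ Metric.ball (0 : Fin n → ℝ) 2,
        ‖iteratedFDeriv ℝ j (φ i) u‖ ≤ ε / (T + 1) := by
      rw [Filter.eventually_all_finset]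
      intro j hj
      have : j ≤ m := by simp at hj; lia
      exact h.2 j this _ (by positivity)
    filter_upwards [h.1, hall] with i hi hall u hu
    have ho : IsOpen (Metric.ball (0 : Fin n → ℝ) 2) := Metric.isOpen_ball
    have hle := norm_iteratedFDerivWithin_mul_le (𝕜 := ℝ) (f := φ i) (g := ψ) (N := m)
      (s := Metric.ball (0 : Fin n → ℝ) 2)
      (fun v hv => (hi v hv).contDiffWithinAt)
      ((hψ.of_le (natCast_le_top m)).contDiffOn) ho.uniqueDiffOn hu (n := a)
      (by exact_mod_cast ha)
    rw [iteratedFDerivWithin_of_isOpen _ ho hu] at hle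
    refine hle.trans ?_
    calc _ ≤ ∑ j ∈ Finset.range (a + 1), (a.choose j : ℝ) * (ε / (T + 1)) * |C (a - j)| := by
          refine Finset.sum_le_sum fun j hj => ?_
          rw [iteratedFDerivWithin_of_isOpen _ ho hu, iteratedFDerivWithin_of_isOpen _ ho hu]
          have h1 := hall j hj u hu
          have h2 := (hC (a - j) u hu).trans (le_abs_self _)
          gcongr
      _ = (ε / (T + 1)) * T := by
          rw [hT, Finset.mul_sum]
          refine Finset.sum_congr rfl fun j _ => by ring
      _ ≤ ε := by
          rw [div_mul_eq_mul_div, div_le_iff₀ (by positivity)]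
          nlinarith

lemma small_const {ι : Type*} {l : Filter ι} {b : ι → ℝ} (hb : Tendsto b l (𝓝 0)) :
    Small m l (fun i (_ : Fin n → ℝ) => b i) := by
  refine ⟨Eventually.of_forall fun i u _ => contDiffAt_const, ?_⟩
  intro a ha ε hε
  have := hb.eventually (Metric.ball_mem_nhds 0 hε)
  filter_upwards [this] with i hi u hu
  rw [dist_zero_right] at hi
  rcases Nat.eq_zero_or_pos a with rfl | hpos
  · simpa using hi.le
  · rw [iteratedFDeriv_const_of_ne hpos.ne']
    simpa using hε.le

lemma Small.bdd_mul {ι : Type*} {l : Filter ι} {φ : ι → (Fin n → ℝ) → ℝ}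
    (h : Small m l φ) {b : ι → ℝ} {C : ℝ} (hb : ∀ᶠ i in l, |b i| ≤ C) :
    Small m l (fun i u => b i * φ i u) := by
  refine ⟨?_, ?_⟩
  · filter_upwards [h.1] with i hi u hu
    exact contDiffAt_const.mul (hi u hu)
  · intro a ha ε hε
    filter_upwards [h.1, hb, h.2 a ha (ε / (|C| + 1)) (by positivity)] with i hi hb h2 u hu
    have hc : (a : WithTop ℕ∞) ≤ (m : WithTop ℕ∞) := by exact_mod_cast ha
    have e : (fun u => b i * φ i u) = b i • φ i := rfl
    rw [e, iteratedFDeriv_const_smul_apply ((hi u hu).of_le hc), norm_smul]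
    have h3 := h2 u hu
    have h4 : ‖b i‖ ≤ |C| + 1 := by
      rw [Real.norm_eq_abs]; linarith [le_abs_self C]
    calc ‖b i‖ * ‖iteratedFDeriv ℝ a (φ i) u‖ ≤ (|C| + 1) * (ε / (|C| + 1)) := by gcongr
      _ = ε := by field_simp

lemma small_scale {ι : Type*} {l : Filter ι} {s : ι → Fin n → ℝ} (hs : Tendsto s l (𝓝 0))
    (hs0 : ∀ᶠ i in l, ∀ j, s i j ≠ 0) {h : (Fin n → ℝ) → ℝ} (hh : ContDiffAt ℝ (⊤ : ℕ∞) h 0)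
    (h0 : h 0 = 0) : Small m l (fun i u => h (s i * u)) := by
  refine ⟨?_, ?_⟩
  · have h1 : ∀ᶠ x in 𝓝 0, ContDiffAt ℝ m h x :=
      (hh.of_le (natCast_le_top m)).eventually (by simp)
    filter_upwards [eventually_scale hs h1] with i hi u hu
    exact contDiffAt_scale (hi u hu)
  · intro a ha ε hε
    have hcont : ContinuousAt (iteratedFDeriv ℝ a h) 0 := by
      have h1 : ContDiffAt ℝ ((a : ℕ) : WithTop ℕ∞) h 0 := hh.of_le (natCast_le_top a)
      exact (h1.iteratedFDeriv_right (m := 0) (i := a) (by simp)).continuousAt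
    rcases Nat.eq_zero_or_pos a with rfl | hpos
    · have : ∀ᶠ x in 𝓝 (0 : Fin n → ℝ), ‖h x‖ ≤ ε := by
        have h2 : Tendsto h (𝓝 0) (𝓝 0) := by
          have := hh.continuousAt.tendsto
          rwa [h0] at this
        filter_upwards [h2.eventually (Metric.ball_mem_nhds 0 hε)] with x hx
        rw [dist_zero_right] at hx
        exact hx.le
      filter_upwards [eventually_scale hs this] with i hi u hu
      simpa using hi u hu
    · set C := ‖iteratedFDeriv ℝ a h 0‖ + 1 with hC
      have hC0 : 0 < C := by positivity
      have : ∀ᶠ x in 𝓝 (0 : Fin n → ℝ), ‖iteratedFDeriv ℝ a h x‖ < C :=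
        hcont.norm.eventually (gt_mem_nhds (lt_add_one _))
      have hsn := hs.eventually (Metric.ball_mem_nhds (0 : Fin n → ℝ)
        (show 0 < min 1 (ε / C) by positivity))
      filter_upwards [eventually_scale hs this, hsn, hs0] with i hi hsi h0i u hu
      rw [dist_zero_right, lt_min_iff] at hsi
      refine (norm_iteratedFDeriv_scale_le (s i) h0i h u a).trans ?_
      calc ‖iteratedFDeriv ℝ a h (s i * u)‖ * ‖s i‖ ^ a ≤ C * (ε / C) := by
            have h5 : ‖s i‖ ^ a ≤ ‖s i‖ ^ 1 := pow_le_pow_of_le_one (norm_nonneg _) hsi.1.le hpos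
            rw [pow_one] at h5
            have h6 := (hi u hu).le
            have h7 := h5.trans hsi.2.le
            gcongr
        _ = ε := by field_simp

/-- `λ_i h(s_i u) → λ h(0)` in `C^m`. -/
lemma small_scale' {ι : Type*} {l : Filter ι} {s : ι → Fin n → ℝ} (hs : Tendsto s l (𝓝 0))
    (hs0 : ∀ᶠ i in l, ∀ j, s i j ≠ 0) {h : (Fin n → ℝ) → ℝ} (hh : ContDiffAt ℝ (⊤ : ℕ∞) h 0)
    {b : ι → ℝ} {b' : ℝ} (hb : Tendsto b l (𝓝 b')) :
    Small m l (fun i u => b i * h (s i * u) - b' * h 0) := by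
  have h1 : Small m l (fun i u => h (s i * u) - h 0) :=
    small_scale (h := fun x => h x - h 0) hs hs0 (hh.sub contDiffAt_const) (by simp)
  have hbd : ∀ᶠ i in l, |b i| ≤ |b'| + 1 :=
    (hb.abs.eventually (gt_mem_nhds (lt_add_one _))).mono fun i hi => le_of_lt hi
  have h2 := (h1.bdd_mul hbd).add (small_const (m := m) (n := n) (l := l)
    (b := fun i => (b i - b') * h 0) (by
      have : Tendsto (fun i => (b i - b') * h 0) l (𝓝 ((b' - b') * h 0)) :=
        (hb.sub_const b').mul_const _
      simpa using this))
  have e : (fun i u => b i * h (s i * u) - b' * h 0) =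
    (fun i u => b i * (h (s i * u) - h 0) + (b i - b') * h 0) := by
    ext i u; ring
  rw [e]; exact h2

lemma small_remainder {ι : Type*} {l : Filter ι} {s : ι → Fin n → ℝ} (hs : Tendsto s l (𝓝 0))
    (hs0 : ∀ᶠ i in l, ∀ j, s i j ≠ 0) {R : (Fin n → ℝ) → ℝ} (hR : ContDiffAt ℝ (⊤ : ℕ∞) R 0)
    {N : ℕ} (hdecay : ∀ a ≤ m, ∃ C, ∀ᶠ x in 𝓝 (0 : Fin n → ℝ),
      ‖iteratedFDeriv ℝ a R x‖ ≤ C * ‖x‖ ^ (N + 1))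
    {μ : ι → ℝ} (hμ : ∀ᶠ i in l, 0 < μ i ∧ ‖s i‖ ^ N ≤ μ i) :
    Small m l (fun i u => (μ i)⁻¹ * R (s i * u)) := by
  have h1 : ∀ᶠ x in 𝓝 0, ContDiffAt ℝ m R x :=
    (hR.of_le (natCast_le_top m)).eventually (by simp)
  refine ⟨?_, ?_⟩
  · filter_upwards [eventually_scale hs h1] with i hi u hu
    exact contDiffAt_const.mul (contDiffAt_scale (hi u hu))
  · intro a ha ε hε
    obtain ⟨C, hC⟩ := hdecay a ha
    have hsn := hs.eventually (Metric.ball_mem_nhds (0 : Fin n → ℝ)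
        (show 0 < min 1 (ε / ((|C| + 1) * 2 ^ (N + 1))) by positivity))
    filter_upwards [eventually_scale hs h1, eventually_scale hs hC, hsn, hs0, hμ]
      with i hi hCi hsi h0i hμi u hu
    rw [dist_zero_right, lt_min_iff] at hsi
    have hc : (a : WithTop ℕ∞) ≤ (m : WithTop ℕ∞) := by exact_mod_cast ha
    have e : (fun u => (μ i)⁻¹ * R (s i * u)) = (μ i)⁻¹ • (fun u => R (s i * u)) := rfl
    rw [e, iteratedFDeriv_const_smul_apply ((contDiffAt_scale (hi u hu)).of_le hc), norm_smul,
      Real.norm_of_nonneg (inv_nonneg.mpr hμi.1.le), inv_mul_le_iff₀ hμi.1]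
    refine (norm_iteratedFDeriv_scale_le (s i) h0i R u a).trans ?_
    have hu' : ‖s i * u‖ ≤ 2 * ‖s i‖ := by
      rw [mem_ball_zero_iff] at hu
      refine (norm_mul_le _ _).trans ?_
      nlinarith [norm_nonneg (s i), norm_nonneg u]
    calc ‖iteratedFDeriv ℝ a R (s i * u)‖ * ‖s i‖ ^ a
        ≤ ((|C| + 1) * (2 * ‖s i‖) ^ (N + 1)) * 1 := by
          have h5 : ‖s i‖ ^ a ≤ 1 := pow_le_one₀ (norm_nonneg _) hsi.1.le
          have h6 : ‖iteratedFDeriv ℝ a R (s i * u)‖ ≤ (|C| + 1) * (2 * ‖s i‖) ^ (N + 1) := by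
            refine (hCi u hu).trans ?_
            have : C ≤ |C| + 1 := by linarith [le_abs_self C]
            gcongr
          gcongr
      _ = (‖s i‖ ^ N) * (‖s i‖ * ((|C| + 1) * 2 ^ (N + 1))) := by ring
      _ ≤ μ i * ε := by
          have h7 := hsi.2.le
          rw [le_div_iff₀ (by positivity)] at h7
          have := hμi.2
          have h8 := hμi.1.le
          gcongr

/-! ### Monomials, power series and the decomposition over minimal exponents -/

lemma contDiff_monomial (α : Fin n → ℕ) {k : WithTop ℕ∞} : ContDiff ℝ k (monomial α) := by
  unfold monomial
  exact contDiff_prod fun i _ => (contDiff_apply ℝ ℝ i).pow _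

lemma monomial_mul (α : Fin n → ℕ) (s u : Fin n → ℝ) :
    monomial α (s * u) = monomial α s * monomial α u := by
  simp [monomial, mul_pow, Finset.prod_mul_distrib]

lemma monomial_add (α β : Fin n → ℕ) (x : Fin n → ℝ) :
    monomial (α + β) x = monomial α x * monomial β x := by
  simp [monomial, pow_add, Finset.prod_mul_distrib]

lemma monomial_zero_exp (x : Fin n → ℝ) : monomial (0 : Fin n → ℕ) x = 1 := by
  simp [monomial]

lemma monomial_at_zero {α : Fin n → ℕ} (h : α ≠ 0) : monomial α (0 : Fin n → ℝ) = 0 := by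
  obtain ⟨i, hi⟩ := Function.ne_iff.mp h
  exact Finset.prod_eq_zero (Finset.mem_univ i) (by simpa using hi)

lemma abs_monomial_le (α : Fin n → ℕ) {x : Fin n → ℝ} {r : ℝ} (hx : ‖x‖ ≤ r) :
    |monomial α x| ≤ r ^ (∑ i, α i) := by
  unfold monomial
  rw [Finset.abs_prod, ← Finset.prod_pow_eq_pow_sum]
  refine Finset.prod_le_prod (fun i _ => abs_nonneg _) fun i _ => ?_
  rw [abs_pow]
  gcongr
  exact (norm_le_pi_norm x i).trans hx

/-- The monomial as a continuous multilinear map on the diagonal. -/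
lemma exists_monomial_multilinear (γ : Fin n → ℕ) :
    ∃ M : ContinuousMultilinearMap ℝ (fun _ : Fin (∑ i, γ i) => Fin n → ℝ) ℝ,
      ‖M‖ ≤ 1 ∧ ∀ x, M (fun _ => x) = monomial γ x := by
  let e : (Σ i, Fin (γ i)) ≃ Fin (∑ i, γ i) := Fintype.equivFinOfCardEq (by simp)
  refine ⟨(ContinuousMultilinearMap.mkPiAlgebra ℝ (Fin (∑ i, γ i)) ℝ).compContinuousLinearMap
    (fun t => ContinuousLinearMap.proj (R := ℝ) (φ := fun _ : Fin n => ℝ) (e.symm t).1), ?_, ?_⟩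
  · refine (ContinuousMultilinearMap.norm_compContinuousLinearMap_le _ _).trans ?_
    rw [ContinuousMultilinearMap.norm_mkPiAlgebra, one_mul]
    refine Finset.prod_le_one (fun i _ => norm_nonneg _) fun i _ => ?_
    refine ContinuousLinearMap.opNorm_le_bound _ zero_le_one fun x => ?_
    rw [one_mul]
    exact norm_le_pi_norm x _
  · intro x
    simp only [ContinuousMultilinearMap.compContinuousLinearMap_apply,
      ContinuousMultilinearMap.mkPiAlgebra_apply, ContinuousLinearMap.proj_apply]
    rw [Equiv.prod_comp e.symm (fun t => x t.1), Fintype.prod_sigma]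
    simp [monomial]

lemma exists_monomial_multilinear' (γ : Fin n → ℕ) (j : ℕ) :
    ∃ M : ContinuousMultilinearMap ℝ (fun _ : Fin j => Fin n → ℝ) ℝ,
      ∑ i, γ i = j → (‖M‖ ≤ 1 ∧ ∀ x, M (fun _ => x) = monomial γ x) := by
  by_cases h : ∑ i, γ i = j
  · subst h
    obtain ⟨M, hM⟩ := exists_monomial_multilinear γ
    exact ⟨M, fun _ => hM⟩
  · exact ⟨0, fun h' => absurd h' h⟩

lemma summable_monomial {d : (Fin n → ℕ) → ℝ} {r : ℝ}
    (hd : Summable fun γ => |d γ| * r ^ (∑ i, γ i)) {x : Fin n → ℝ} (hx : ‖x‖ ≤ r) :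
    Summable fun γ => d γ * monomial γ x := by
  refine Summable.of_norm_bounded hd fun γ => ?_
  rw [Real.norm_eq_abs, abs_mul]
  gcongr
  exact abs_monomial_le γ hx

lemma powerSeries_contDiffAt {d : (Fin n → ℕ) → ℝ} {r : ℝ} (hr : 0 < r)
    (hd : Summable fun γ => |d γ| * r ^ (∑ i, γ i)) :
    ContDiffAt ℝ (⊤ : ℕ∞) (fun x => ∑' γ, d γ * monomial γ x) 0 := by
  classical
  lift r to NNReal using hr.le
  choose M hM using fun (j : ℕ) (γ : Fin n → ℕ) => exists_monomial_multilinear' γ j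
  let A : ℕ → Finset (Fin n → ℕ) := fun j => Finset.piAntidiag Finset.univ j
  have hA : ∀ j γ, γ ∈ A j ↔ ∑ i, γ i = j := by
    intro j γ
    simp [A, Finset.mem_piAntidiag]
  let p : FormalMultilinearSeries ℝ (Fin n → ℝ) ℝ := fun j => ∑ γ ∈ A j, d γ • M j γ
  have hp : HasFPowerSeriesOnBall (fun x => ∑' γ, d γ * monomial γ x) p 0
      (r : ENNReal) := by
    refine ⟨?_, ?_, ?_⟩
    · refine p.le_radius_of_bound (∑' γ, |d γ| * (r : ℝ) ^ (∑ i, γ i)) fun j => ?_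
      have h1 : ‖p j‖ ≤ ∑ γ ∈ A j, |d γ| := by
        refine (norm_sum_le _ _).trans (Finset.sum_le_sum fun γ hγ => ?_)
        rw [norm_smul, Real.norm_eq_abs]
        exact mul_le_of_le_one_right (abs_nonneg _) (hM j γ ((hA j γ).mp hγ)).1
      calc ‖p j‖ * r ^ j ≤ (∑ γ ∈ A j, |d γ|) * r ^ j := by gcongr
        _ = ∑ γ ∈ A j, |d γ| * r ^ (∑ i, γ i) := by
          rw [Finset.sum_mul]
          refine Finset.sum_congr rfl fun γ hγ => ?_
          rw [(hA j γ).mp hγ]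
        _ ≤ _ := hd.sum_le_tsum _ fun γ _ => by positivity
    · simpa using hr
    · intro y hy
      have hy' : ‖y‖ ≤ r := by
        rw [Metric.eball_coe, mem_ball_zero_iff] at hy
        exact hy.le
      rw [zero_add]
      have h2 := (summable_monomial hd hy').hasSum.tsum_fiberwise (fun γ => ∑ i, γ i)
      convert h2 using 2 with j
      have e : (fun γ : Fin n → ℕ => ∑ i, γ i) ⁻¹' {j} = (A j : Set (Fin n → ℕ)) := by
        ext γ
        simp [hA]
      rw [e, Finset.tsum_subtype' (A j) (fun γ => d γ * monomial γ y)]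
      simp only [p, _root_.sum_apply, _root_.smul_apply, smul_eq_mul]
      refine Finset.sum_congr rfl fun γ hγ => ?_
      rw [(hM j γ ((hA j γ).mp hγ)).2]
  exact hp.analyticAt.contDiffAt

lemma decomp (D : Finset (Fin n → ℕ)) (b : (Fin n → ℕ) → (Fin n → ℕ)) (c' : (Fin n → ℕ) → ℝ)
    (hb : ∀ α, c' α ≠ 0 → b α ∈ D ∧ b α ≤ α) (hbD : ∀ β ∈ D, b β = β) {r : ℝ} (hr : 0 < r)
    (hsum : Summable fun γ => |c' γ| * r ^ (∑ i, γ i)) :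
    ∃ h : (Fin n → ℕ) → (Fin n → ℝ) → ℝ,
      (∀ β ∈ D, ContDiffAt ℝ (⊤ : ℕ∞) (h β) 0 ∧ h β 0 = c' β) ∧
      ∀ᶠ x in 𝓝 (0 : Fin n → ℝ),
        HasSum (fun α => c' α * monomial α x) (∑ β ∈ D, monomial β x * h β x) := by
  classical
  let d : (Fin n → ℕ) → (Fin n → ℕ) → ℝ := fun β γ => if b (γ + β) = β then c' (γ + β) else 0
  have hd : ∀ β, Summable fun γ => |d β γ| * r ^ (∑ i, γ i) := by
    intro β
    have hinj : Function.Injective (fun γ : Fin n → ℕ => γ + β) := add_left_injective β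
    have h1 := (hsum.comp_injective hinj).mul_left ((r ^ (∑ i, β i))⁻¹)
    refine Summable.of_nonneg_of_le (fun γ => by positivity) (fun γ => ?_) h1
    have h2 : |d β γ| ≤ |c' (γ + β)| := by
      simp only [d]; split_ifs <;> simp
    simp only [Function.comp, Pi.add_apply, Finset.sum_add_distrib, pow_add]
    have h3 : (r ^ (∑ i, β i))⁻¹ * (|c' (γ + β)| * (r ^ (∑ i, γ i) * r ^ (∑ i, β i)))
      = |c' (γ + β)| * r ^ (∑ i, γ i) := by field_simp
    rw [h3]
    gcongr
  refine ⟨fun β x => ∑' γ, d β γ * monomial γ x, ?_, ?_⟩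
  · intro β hβ
    refine ⟨powerSeries_contDiffAt hr (hd β), ?_⟩
    dsimp only
    rw [tsum_eq_single 0]
    · simp [d, hbD β hβ, monomial_zero_exp]
    · intro γ hγ
      rw [monomial_at_zero hγ, mul_zero]
  · filter_upwards [Metric.closedBall_mem_nhds (0 : Fin n → ℝ) hr] with x hx
    rw [mem_closedBall_zero_iff] at hx
    have hkey : ∀ β ∈ D, HasSum (fun α => if b α = β then c' α * monomial α x else 0)
        (monomial β x * ∑' γ, d β γ * monomial γ x) := by
      intro β _
      have h1 := (summable_monomial (hd β) hx).hasSum.mul_left (monomial β x)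
      have hinj : Function.Injective (fun γ : Fin n → ℕ => γ + β) := add_left_injective β
      rw [← hinj.hasSum_iff]
      · refine Eq.mp (congrArg (fun F => HasSum F _) (funext fun γ => Eq.symm ?_)) h1
        show (if b (γ + β) = β then c' (γ + β) * monomial (γ + β) x else 0) =
          monomial β x * ((if b (γ + β) = β then c' (γ + β) else 0) * monomial γ x)
        rw [monomial_add]
        split_ifs <;> ring
      · intro α hα
        split_ifs with h
        · by_cases hc : c' α = 0
          · simp [hc]
          · exfalso
            apply hα
            have h2 := (hb α hc).2
            rw [h] at h2
            exact ⟨α - β, tsub_add_cancel_of_le h2⟩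
        · rfl
    convert hasSum_sum hkey using 2 with α
    by_cases hc : c' α = 0
    · simp [hc]
    · rw [Finset.sum_ite_eq, if_pos (hb α hc).1]

lemma exists_minExp (c : (Fin n → ℕ) → ℝ) : ∃ D : Finset (Fin n → ℕ),
    ∃ b : (Fin n → ℕ) → (Fin n → ℕ), (∀ β ∈ D, c β ≠ 0) ∧
      (∀ α, c α ≠ 0 → b α ∈ D ∧ b α ≤ α) ∧ (∀ β ∈ D, b β = β) := by
  classical
  have hfin : {α : Fin n → ℕ | Minimal (fun a => c a ≠ 0) α}.Finite := by
    apply WellQuasiOrderedLE.finite_of_isAntichain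
    intro a ha b hb hab hle
    exact hab (le_antisymm hle (hb.2 ha.1 hle))
  have hex : ∀ α, ∃ β, c α ≠ 0 → (Minimal (fun a => c a ≠ 0) β ∧ β ≤ α) := by
    intro α
    by_cases h : c α = 0
    · exact ⟨0, fun h' => absurd h h'⟩
    · obtain ⟨β, hβ, hm⟩ := exists_minimal_le_of_wellFoundedLT (fun a => c a ≠ 0) α h
      exact ⟨β, fun _ => ⟨hm, hβ⟩⟩
  choose b hb using hex
  refine ⟨hfin.toFinset, b, ?_, ?_, ?_⟩
  · intro β hβ
    rw [Set.Finite.mem_toFinset] at hβ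
    exact hβ.1
  · intro α hα
    rw [Set.Finite.mem_toFinset]
    exact hb α hα
  · intro β hβ
    rw [Set.Finite.mem_toFinset] at hβ
    have := hb β hβ.1
    exact le_antisymm this.2 (hβ.2 this.1.1 this.2)

/-! ### Local structure of `f` -/

lemma axis_exponent {c : (Fin n → ℕ) → ℝ} {i : Fin n}
    (h : ∃ x ∈ newtonPolyhedron c, ∀ j, j ≠ i → x j = 0) :
    ∃ p : ℕ, c (Pi.single i p) ≠ 0 := by
  classical
  by_contra! hcon
  obtain ⟨x, hx, hx0⟩ := h
  have hsub : newtonPolyhedron c ⊆ {x | 1 ≤ ∑ j ∈ Finset.univ.erase i, x j} := by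
    refine convexHull_min ?_ ?_
    · rintro y ⟨α, hα, hαy⟩
      have : ∃ j, j ≠ i ∧ α j ≠ 0 := by
        by_contra! hz
        apply hα
        have : α = Pi.single i (α i) := by
          ext j
          by_cases hj : j = i
          · subst hj; simp
          · simp [hj, hz j hj]
        rw [this]
        exact hcon _
      obtain ⟨j, hji, hj⟩ := this
      have h1 : (1 : ℝ) ≤ α j := by exact_mod_cast Nat.one_le_iff_ne_zero.mpr hj
      refine (h1.trans (hαy j)).trans ?_
      exact Finset.single_le_sum (f := fun j => y j)
        (fun k _ => (Nat.cast_nonneg (α k)).trans (hαy k)) (by simp [hji])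
    · intro y hy z hz a b ha hb hab
      simp only [Set.mem_ofPred_eq, Pi.add_apply, Pi.smul_apply, smul_eq_mul,
        Finset.sum_add_distrib, ← Finset.mul_sum] at *
      nlinarith
  have h2 : (1 : ℝ) ≤ ∑ j ∈ Finset.univ.erase i, x j := hsub hx
  rw [Finset.sum_eq_zero fun j hj => hx0 j (Finset.ne_of_mem_erase hj)] at h2
  linarith

lemma low_coeffs {f : (Fin n → ℝ) → ℝ} {c : (Fin n → ℕ) → ℝ}
    (hd : DifferentiableAt ℝ f 0) (hf0 : f 0 = 0) (hf1 : fderiv ℝ f 0 = 0)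
    (hT : IsTaylorSeriesAt f c) : c 0 = 0 ∧ ∀ i, c (Pi.single i 1) = 0 := by
  classical
  have h1 := hT 1
  set S := (Fintype.piFinset fun _ : Fin n => Finset.range (1 + 1)).filter
          (fun α => ∑ i, α i ≤ 1) with hS
  have hc0 : c 0 = 0 := by
    have h2 := (h1.def zero_lt_one).self_of_nhds
    simp only [hf0, norm_zero, pow_one, mul_zero, norm_le_zero_iff, zero_sub, neg_eq_zero] at h2
    rw [Finset.sum_eq_single 0] at h2
    · simpa [monomial_zero_exp] using h2
    · intro b _ hb
      rw [monomial_at_zero hb, mul_zero]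
    · intro h
      exfalso
      apply h
      simp [hS]
  refine ⟨hc0, fun i => ?_⟩
  have hfo : f =o[𝓝 (0 : Fin n → ℝ)] fun x => ‖x‖ ^ 1 := by
    have := hd.hasFDerivAt.isLittleO
    rw [hf1] at this
    simpa [hf0] using this.norm_right
  have h2 := hfo.sub h1
  simp only [sub_sub_cancel] at h2
  by_contra hne
  have ht : Tendsto (fun t : ℝ => (Pi.single i t : Fin n → ℝ)) (𝓝 0) (𝓝 0) := by
    have : Continuous (fun t : ℝ => (Pi.single i t : Fin n → ℝ)) :=
      continuous_single (A := fun _ : Fin n => ℝ) i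
    simpa using this.tendsto 0
  have h3 := ht.eventually (h2.def (c := |c (Pi.single i 1)| / 2) (by positivity))
  have h4 : ∀ᶠ t : ℝ in 𝓝[≠] 0, False := by
    filter_upwards [nhdsWithin_le_nhds h3, self_mem_nhdsWithin] with t ht ht0
    rw [Finset.sum_eq_single (Pi.single i 1)] at ht
    · have e : monomial (Pi.single i 1 : Fin n → ℕ) (Pi.single i t : Fin n → ℝ) = t := by
        unfold monomial
        rw [Finset.prod_eq_single i]
        · simp
        · intro j _ hj
          simp [hj]
        · simp
      rw [e] at ht
      have e2 : ‖(Pi.single i t : Fin n → ℝ)‖ = |t| := by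
        rw [Pi.norm_single]; rfl
      rw [norm_pow, norm_norm, e2, pow_one, Real.norm_eq_abs, abs_mul] at ht
      have h5 : 0 < |c (Pi.single i 1)| := by positivity
      have h6 : 0 < |t| := abs_pos.mpr ht0
      nlinarith
    · intro α hα hαi
      by_cases hz : α = 0
      · rw [hz, hc0, zero_mul]
      · have : ∃ j, j ≠ i ∧ α j ≠ 0 := by
          by_contra! hz'
          have hle : ∑ j, α j ≤ 1 := (Finset.mem_filter.mp hα).2
          have hi1 : α i ≤ 1 := (Finset.single_le_sum (f := α) (fun _ _ => Nat.zero_le _) (Finset.mem_univ i)).trans hle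
          have hα' : α = Pi.single i (α i) := by
            ext j
            by_cases hj : j = i
            · subst hj; simp
            · simp [hj, hz' j hj]
          interval_cases hαi' : α i
          · apply hz; rw [hα']; simp
          · exact hαi hα'
        obtain ⟨j, hji, hj⟩ := this
        have : monomial α (Pi.single i t : Fin n → ℝ) = 0 :=
          Finset.prod_eq_zero (Finset.mem_univ j) (by simp [hji, hj])
        rw [this, mul_zero]
    · intro h
      exfalso
      apply h
      simp only [hS, Finset.mem_filter, Fintype.mem_piFinset, Finset.mem_range]
      refine ⟨fun j => ?_, by simp⟩
      by_cases hj : j = i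
      · subst hj; simp
      · simp [hj]
  exact h4.exists.elim fun _ h => h

lemma local_structure {f : (Fin n → ℝ) → ℝ} {c : (Fin n → ℕ) → ℝ}
    (hsm : ContDiffAt ℝ (⊤ : ℕ∞) f 0)
    (hT : IsTaylorSeriesAt f c)
    (hcase : HasTaylorSeriesAtOrigin f c ∨
      ∀ i : Fin n, ∃ x ∈ newtonPolyhedron c, ∀ j, j ≠ i → x j = 0) (mm : ℕ)
    (D : Finset (Fin n → ℕ)) (b : (Fin n → ℕ) → (Fin n → ℕ))
    (hb : ∀ α, c α ≠ 0 → b α ∈ D ∧ b α ≤ α) (hbD : ∀ β ∈ D, b β = β) :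
    ∃ (h : (Fin n → ℕ) → (Fin n → ℝ) → ℝ) (R : (Fin n → ℝ) → ℝ) (N : ℕ),
      (∀ β ∈ D, ContDiffAt ℝ (⊤ : ℕ∞) (h β) 0 ∧ h β 0 = c β) ∧
      ContDiffAt ℝ (⊤ : ℕ∞) R 0 ∧
      (∀ a ≤ mm, ∃ C, ∀ᶠ x in 𝓝 (0 : Fin n → ℝ), ‖iteratedFDeriv ℝ a R x‖ ≤ C * ‖x‖ ^ (N + 1)) ∧
      (∀ᶠ x in 𝓝 (0 : Fin n → ℝ), f x = ∑ β ∈ D, monomial β x * h β x + R x) ∧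
      (R = 0 ∨ ∀ i, ∃ p ≤ N, c (Pi.single i p) ≠ 0) := by
  classical
  rcases hcase with hA | hC
  · obtain ⟨r, hr, hball⟩ := Metric.eventually_nhds_iff_ball.mp hA
    have hsum : Summable fun γ => |c γ| * (r / 2) ^ (∑ i, γ i) := by
      have h1 := (hball (fun _ => r / 2) (by
        rw [mem_ball_zero_iff]
        refine lt_of_le_of_lt ((pi_norm_le_iff_of_nonneg (by positivity)).mpr fun i => le_of_eq ?_)
          (half_lt_self hr)
        rw [Real.norm_eq_abs, abs_of_pos (by positivity)])).summable.abs
      refine h1.congr fun γ => ?_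
      rw [abs_mul]
      congr 1
      unfold monomial
      rw [Finset.prod_pow_eq_pow_sum, abs_of_pos (by positivity)]
    obtain ⟨h, hh, hs⟩ := decomp D b c hb hbD (half_pos hr) hsum
    refine ⟨h, 0, 0, hh, contDiffAt_const, ?_, ?_, Or.inl rfl⟩
    · intro a _
      refine ⟨0, Eventually.of_forall fun x => ?_⟩
      have : (0 : (Fin n → ℝ) → ℝ) = fun _ => 0 := rfl
      rw [this, iteratedFDeriv_fun_zero]
      simp
    · filter_upwards [hA, hs] with x h1 h2
      rw [h1.unique h2]; simp
  · choose p hp using fun i => axis_exponent (hC i)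
    set N := ∑ i, p i with hN
    set Q := ∑ β ∈ D, ∑ i, β i with hQ
    set N' := 2 ^ (mm + Q) * (N + 1) with hN'
    have hQN : Q ≤ N' := by
      calc Q ≤ 2 ^ Q := Nat.lt_two_pow_self.le
        _ ≤ 2 ^ (mm + Q) := Nat.pow_le_pow_right (by norm_num) (by omega)
        _ ≤ _ := Nat.le_mul_of_pos_right _ (by omega)
    set S := (Fintype.piFinset fun _ : Fin n => Finset.range (N' + 1)).filter
          (fun α => ∑ i, α i ≤ N') with hS
    have hmemS : ∀ α, α ∈ S ↔ ∑ i, α i ≤ N' := by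
      intro α
      simp only [hS, Finset.mem_filter, Fintype.mem_piFinset, Finset.mem_range, and_iff_right_iff_imp]
      intro h i
      have := Finset.single_le_sum (f := α) (fun _ _ => Nat.zero_le _) (Finset.mem_univ i)
      omega
    let c' : (Fin n → ℕ) → ℝ := fun α => if α ∈ S then c α else 0
    have hc'0 : ∀ α ∉ S, c' α = 0 := fun α h => if_neg h
    have hsum : Summable fun γ => |c' γ| * (1 : ℝ) ^ (∑ i, γ i) :=
      summable_of_ne_finset_zero (s := S) fun α h => by simp [hc'0 α h]
    obtain ⟨h, hh, hs⟩ := decomp D b c' (fun α hα => hb α (by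
      intro h0; apply hα; simp [c', h0])) hbD zero_lt_one hsum
    have hT' := hT N'
    set R : (Fin n → ℝ) → ℝ := fun x => f x - ∑ α ∈ S, c α * monomial α x with hR
    have hRs : ContDiffAt ℝ (⊤ : ℕ∞) R 0 := by
      refine hsm.sub ?_
      exact (ContDiff.sum fun α _ => contDiff_const.mul (contDiff_monomial α)).contDiffAt
    refine ⟨h, R, N, ?_, hRs, ?_, ?_, Or.inr fun i => ⟨p i, ?_, hp i⟩⟩
    · intro β hβ
      refine ⟨(hh β hβ).1, (hh β hβ).2.trans (if_pos ?_)⟩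
      rw [hmemS]
      refine le_trans ?_ hQN
      exact Finset.single_le_sum (f := fun β : Fin n → ℕ => ∑ i, β i) (fun _ _ => Nat.zero_le _) hβ
    · intro a ha
      have := decay_iterated hRs (p := N + 1) (by omega) a (mm - a + Q) ⟨1, by
        filter_upwards [hT'.def zero_lt_one] with x hx
        have e : 2 ^ a * (2 ^ (mm - a + Q) * (N + 1)) = N' := by
          rw [← mul_assoc, ← pow_add, hN']
          congr 2
          omega
        rw [e]
        simpa using hx⟩
      obtain ⟨C, hCx⟩ := this
      refine ⟨|C|, ?_⟩
      filter_upwards [hCx, Metric.closedBall_mem_nhds (0 : Fin n → ℝ) zero_lt_one] with x hx hx1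
      rw [mem_closedBall_zero_iff] at hx1
      refine hx.trans ?_
      gcongr ?_ * ?_
      · exact le_abs_self C
      · exact pow_le_pow_of_le_one (norm_nonneg _) hx1 (Nat.le_mul_of_pos_left _ (by positivity))
    · filter_upwards [hs] with x hx
      have h2 : HasSum (fun α => c' α * monomial α x) (∑ α ∈ S, c' α * monomial α x) :=
        hasSum_sum_of_ne_finset_zero fun α hα => by rw [hc'0 α hα, zero_mul]
      rw [hx.unique h2]
      have h3 : ∑ α ∈ S, c' α * monomial α x = ∑ α ∈ S, c α * monomial α x :=
        Finset.sum_congr rfl fun α hα => by simp [c', hα]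
      rw [h3, hR]
      ring
    · exact Finset.single_le_sum (f := p) (fun _ _ => Nat.zero_le _) (Finset.mem_univ i)

/-! ### Upper bound for `f^*` -/

lemma newtonVertices_sub {c : (Fin n → ℕ) → ℝ} {D : Finset (Fin n → ℕ)}
    {b : (Fin n → ℕ) → (Fin n → ℕ)} (hD : ∀ β ∈ D, c β ≠ 0)
    (hb : ∀ α, c α ≠ 0 → b α ∈ D ∧ b α ≤ α) {v : Fin n → ℝ} (hv : v ∈ newtonVertices c) :
    ∃ β ∈ D, (fun i => (β i : ℝ)) = v := by
  obtain ⟨α, hα, hle⟩ := extremePoints_convexHull_subset hv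
  obtain ⟨h1, h2⟩ := hb α hα
  refine ⟨b α, h1, ?_⟩
  have hle' : ∀ i, ((b α i : ℕ) : ℝ) ≤ v i := fun i =>
    (Nat.cast_le.mpr (h2 i)).trans (hle i)
  have hm1 : (fun i => ((b α i : ℕ) : ℝ)) ∈ newtonPolyhedron c :=
    subset_convexHull ℝ _ ⟨b α, hD _ h1, fun i => le_rfl⟩
  have hm2 : (fun i => 2 * v i - ((b α i : ℕ) : ℝ)) ∈ newtonPolyhedron c :=
    subset_convexHull ℝ _ ⟨b α, hD _ h1, fun i => by linarith [hle' i]⟩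
  refine (mem_extremePoints.mp hv).2 _ hm1 _ hm2 ?_ |>.1
  refine ⟨1/2, 1/2, by norm_num, by norm_num, by norm_num, ?_⟩
  ext i
  simp only [Pi.add_apply, Pi.smul_apply, smul_eq_mul]
  ring

lemma starFn_le {c : (Fin n → ℕ) → ℝ} {D : Finset (Fin n → ℕ)}
    {b : (Fin n → ℕ) → (Fin n → ℕ)} (hD : ∀ β ∈ D, c β ≠ 0)
    (hb : ∀ α, c α ≠ 0 → b α ∈ D ∧ b α ≤ α) {s u : Fin n → ℝ} (hs : ∀ i, 0 < s i)
    (hu : ∀ i, |u i| ≤ 1) {μ : ℝ} (hμ0 : 0 ≤ μ) (hμ : ∀ β ∈ D, monomial β s ≤ μ) :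
    starFn c (s * u) ≤ D.card * μ := by
  classical
  set T : Finset (Fin n → ℝ) := D.image fun β i => (β i : ℝ)
  have hsub : newtonVertices c ⊆ T := by
    intro v hv
    obtain ⟨β, hβ, rfl⟩ := newtonVertices_sub hD hb hv
    exact Finset.mem_coe.mpr (Finset.mem_image_of_mem _ hβ)
  have hfin : (newtonVertices c).Finite := T.finite_toSet.subset hsub
  have : Fintype (newtonVertices c) := hfin.fintype
  unfold starFn
  rw [tsum_fintype]
  have hcard : Fintype.card (newtonVertices c) ≤ D.card := by
    rw [← Set.toFinset_card]
    refine (Finset.card_le_card (t := T) ?_).trans Finset.card_image_le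
    intro v hv
    exact Finset.mem_coe.mp (hsub (Set.mem_toFinset.mp hv))
  refine (Finset.sum_le_card_nsmul _ _ μ ?_).trans ?_
  · rintro ⟨v, hv⟩ -
    obtain ⟨β, hβ, rfl⟩ := newtonVertices_sub hD hb hv
    refine le_trans ?_ (hμ β hβ)
    unfold monomial
    refine Finset.prod_le_prod (fun i _ => by positivity) fun i _ => ?_
    simp only [Real.rpow_natCast, Pi.mul_apply]
    gcongr
    rw [abs_mul, abs_of_pos (hs i)]
    exact mul_le_of_le_one_right (hs i).le (hu i)
  · rw [nsmul_eq_mul, Finset.card_univ]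
    gcongr

/-! ### Face polynomials -/

/-- The polynomial with coefficients `c` and exponents in `F0`. -/
def facePol (c : (Fin n → ℕ) → ℝ) (F0 : Finset (Fin n → ℕ)) (x : Fin n → ℝ) : ℝ :=
  ∑ α ∈ F0, c α * monomial α x

/-- Supporting functional data for a compact face. -/
structure FaceData (c : (Fin n → ℕ) → ℝ) (D F0 : Finset (Fin n → ℕ)) (w : Fin n → ℝ) (d : ℝ) :
    Prop where
  sub : F0 ⊆ D
  nonempty : F0.Nonempty
  pos : ∀ i, 0 < w i
  eq : ∀ α ∈ F0, ∑ i, w i * (α i : ℝ) = d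
  lt : ∀ α ∈ D, α ∉ F0 → d < ∑ i, w i * (α i : ℝ)

lemma FaceData.le {c : (Fin n → ℕ) → ℝ} {D F0 : Finset (Fin n → ℕ)} {w : Fin n → ℝ} {d : ℝ}
    (H : FaceData c D F0 w d) {α : Fin n → ℕ} (h : α ∈ D) : d ≤ ∑ i, w i * (α i : ℝ) := by
  by_cases hα : α ∈ F0
  · exact (H.eq α hα).ge
  · exact (H.lt α h hα).le

lemma dot_eq_of_le {w y z : Fin n → ℝ} (hw : ∀ i, 0 < w i) (hle : ∀ i, y i ≤ z i)
    (h : ∑ i, w i * z i ≤ ∑ i, w i * y i) : y = z := by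
  by_contra hne
  obtain ⟨i, hi⟩ := Function.ne_iff.mp hne
  have : ∑ i, w i * y i < ∑ i, w i * z i :=
    Finset.sum_lt_sum (fun j _ => mul_le_mul_of_nonneg_left (hle j) (hw j).le)
      ⟨i, Finset.mem_univ i, mul_lt_mul_of_pos_left (lt_of_le_of_ne (hle i) hi) (hw i)⟩
  linarith

lemma face_facts {c : (Fin n → ℕ) → ℝ} {D F0 : Finset (Fin n → ℕ)} {w : Fin n → ℝ} {d : ℝ}
    {b : (Fin n → ℕ) → (Fin n → ℕ)} (hD : ∀ β ∈ D, c β ≠ 0)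
    (hb : ∀ α, c α ≠ 0 → b α ∈ D ∧ b α ≤ α) (H : FaceData c D F0 w d) :
    ∃ F, IsCompactFace c F ∧ facePoly c F = facePol c F0 := by
  classical
  set K : Set (Fin n → ℝ) := convexHull ℝ ((fun (α : Fin n → ℕ) i => (α i : ℝ)) '' (F0 : Set (Fin n → ℕ)))
    with hK
  have hlin : ∀ (a e : ℝ) (x y : Fin n → ℝ), ∑ i, w i * (a • x + e • y) i =
      a * ∑ i, w i * x i + e * ∑ i, w i * y i := by
    intro a e x y
    rw [Finset.mul_sum, Finset.mul_sum, ← Finset.sum_add_distrib]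
    refine Finset.sum_congr rfl fun i _ => ?_
    simp only [Pi.add_apply, Pi.smul_apply, smul_eq_mul]
    ring
  have hKd : ∀ x ∈ K, ∑ i, w i * x i = d := by
    have : K ⊆ {x | ∑ i, w i * x i = d} := by
      refine convexHull_min ?_ ?_
      · rintro _ ⟨α, hα, rfl⟩
        exact H.eq α hα
      · intro x hx y hy a e ha he hae
        change ∑ i, w i * x i = d at hx
        change ∑ i, w i * y i = d at hy
        change ∑ i, w i * (a • x + e • y) i = d
        rw [hlin, hx, hy, ← add_mul, hae, one_mul]
    exact this
  have hKN : K ⊆ newtonPolyhedron c := by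
    refine convexHull_mono ?_
    rintro _ ⟨α, hα, rfl⟩
    exact ⟨α, hD α (H.sub hα), fun i => le_rfl⟩
  -- points of the polyhedron
  have hN : ∀ x ∈ newtonPolyhedron c, d < ∑ i, w i * x i ∨ x ∈ K := by
    have : newtonPolyhedron c ⊆ {x | d < ∑ i, w i * x i ∨ x ∈ K} := by
      refine convexHull_min ?_ ?_
      · rintro y ⟨α, hα, hαy⟩
        obtain ⟨h1, h2⟩ := hb α hα
        have hle : ∀ i, ((b α i : ℕ) : ℝ) ≤ y i := fun i =>
          (Nat.cast_le.mpr (h2 i)).trans (hαy i)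
        by_cases hlt : d < ∑ i, w i * y i
        · exact Or.inl hlt
        · right
          have hβ := H.le h1
          have heq := dot_eq_of_le H.pos hle ((not_lt.mp hlt).trans hβ)
          refine subset_convexHull ℝ _ ⟨b α, ?_, heq⟩
          by_contra hF
          have h3 := H.lt _ h1 hF
          apply hlt
          rw [← heq]
          exact h3
      · intro x hx y hy a e ha he hae
        change d < ∑ i, w i * (a • x + e • y) i ∨ a • x + e • y ∈ K
        rcases ha.eq_or_lt with rfl | ha
        · have : e = 1 := by linarith
          subst this
          simpa using hy
        rcases he.eq_or_lt with rfl | he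
        · have : a = 1 := by linarith
          subst this
          simpa using hx
        rw [hlin]
        rcases hx with hx | hx
        · left
          have hy' : d ≤ ∑ i, w i * y i := hy.elim le_of_lt fun h => (hKd y h).ge
          have h1 := mul_lt_mul_of_pos_left hx ha
          have h2 := mul_le_mul_of_nonneg_left hy' he.le
          have h3 : a * d + e * d = d := by rw [← add_mul, hae, one_mul]
          linarith
        · rcases hy with hy | hy
          · left
            rw [hKd x hx]
            have h2 := mul_lt_mul_of_pos_left hy he
            have h3 : a * d + e * d = d := by rw [← add_mul, hae, one_mul]
            linarith
          · right
            exact convex_convexHull ℝ _ hx hy ha.le he.le hae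
    exact this
  have hNle : ∀ x ∈ newtonPolyhedron c, d ≤ ∑ i, w i * x i := fun x hx =>
    (hN x hx).elim le_of_lt fun h => (hKd x h).ge
  obtain ⟨α1, hα1⟩ := H.nonempty
  have hFaceK : (fun i => (α1 i : ℝ)) ∈ K := subset_convexHull ℝ _ ⟨α1, hα1, rfl⟩
  refine ⟨K, ⟨?_, ⟨_, hFaceK⟩, ?_⟩, ?_⟩
  · intro _
    let l : (Fin n → ℝ) →L[ℝ] ℝ := -∑ i, w i • ContinuousLinearMap.proj (R := ℝ) (φ := fun _ : Fin n => ℝ) i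
    have hl : ∀ x, l x = -∑ i, w i * x i := by
      intro x
      simp [l]
    refine ⟨l, ?_⟩
    ext x
    constructor
    · intro hx
      refine ⟨hKN hx, fun y hy => ?_⟩
      rw [hl, hl, hKd x hx]
      linarith [hNle y hy]
    · rintro ⟨hx, hmax⟩
      have h1 := hmax _ (hKN hFaceK)
      rw [hl, hl, hKd _ hFaceK] at h1
      rcases hN x hx with h | h
      · linarith
      · exact h
  · exact (F0.finite_toSet.image _).isCompact_convexHull (𝕜 := ℝ)
  · funext x
    have h1 : facePoly c K x = ∑' α, Set.indicator {α : Fin n → ℕ | (fun i => (α i : ℝ)) ∈ K}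
        (fun α => c α * monomial α x) α :=
      tsum_subtype {α : Fin n → ℕ | (fun i => (α i : ℝ)) ∈ K} (fun α => c α * monomial α x)
    rw [h1, tsum_eq_sum (s := F0)]
    · refine Finset.sum_congr rfl fun α hα => Set.indicator_of_mem ?_ _
      exact subset_convexHull ℝ _ ⟨α, hα, rfl⟩
    · intro α hα
      rw [Set.indicator_apply]
      split_ifs with hmem
      · by_cases hc : c α = 0
        · rw [hc, zero_mul]
        · exfalso
          obtain ⟨h2, h3⟩ := hb α hc
          have h4 : ∑ i, w i * (α i : ℝ) = d := hKd _ hmem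
          have h5 := dot_eq_of_le H.pos (fun i => Nat.cast_le.mpr (h3 i)) (h4.le.trans (H.le h2))
          have h6 : b α = α := by
            ext i
            exact_mod_cast congrFun h5 i
          rw [h6] at h2
          have := H.lt α h2 hα
          linarith
      · rfl

lemma contDiff_facePol (c : (Fin n → ℕ) → ℝ) (F0 : Finset (Fin n → ℕ)) {k : WithTop ℕ∞} :
    ContDiff ℝ k (facePol c F0) :=
  ContDiff.sum fun α _ => contDiff_const.mul (contDiff_monomial α)

lemma claimA {c : (Fin n → ℕ) → ℝ} {D F0 : Finset (Fin n → ℕ)} {w : Fin n → ℝ} {d : ℝ}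
    {b : (Fin n → ℕ) → (Fin n → ℕ)} (hD : ∀ β ∈ D, c β ≠ 0)
    (hb : ∀ α, c α ≠ 0 → b α ∈ D ∧ b α ≤ α) (H : FaceData c D F0 w d)
    {oF : ℕ} (hoF : newtonOrder c = (oF : ℕ∞)) {x : Fin n → ℝ} (hx : ∀ i, x i ≠ 0) :
    ∃ a ≤ oF, iteratedFDeriv ℝ a (facePol c F0) x ≠ 0 := by
  by_contra! hcon
  obtain ⟨F, hF, hP⟩ := face_facts hD hb H
  have h0 : facePol c F0 x = 0 := by
    have := hcon 0 (Nat.zero_le _)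
    rw [← norm_eq_zero, norm_iteratedFDeriv_zero, norm_eq_zero] at this
    exact this
  have h1 : ((oF + 1 : ℕ) : ℕ∞) ≤ newtonOrder c := by
    refine le_sSup ⟨F, hF, x, hx, by rw [hP, h0], le_sSup ?_⟩
    intro j hj
    rw [hP]
    exact hcon j (by have := ENat.natCast_lt_natCast.mp hj; omega)
  rw [hoF] at h1
  have := ENat.natCast_le_natCast.mp h1
  omega

lemma fderiv_monomial (α : Fin n → ℕ) (x v : Fin n → ℝ) :
    fderiv ℝ (monomial α) x v =
      ∑ i, (∏ j ∈ Finset.univ.erase i, x j ^ α j) * ((α i : ℝ) * x i ^ (α i - 1) * v i) := by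
  classical
  have h : HasFDerivAt (monomial α) (∑ i, (∏ j ∈ Finset.univ.erase i, x j ^ α j) •
      (((α i : ℝ) * x i ^ (α i - 1)) •
        ContinuousLinearMap.proj (R := ℝ) (φ := fun _ : Fin n => ℝ) i)) x := by
    refine HasFDerivAt.finsetProd (u := Finset.univ) (g := fun (i : Fin n) (x : Fin n → ℝ) => x i ^ α i) (fun i _ => ?_)
    have := (hasFDerivAt_apply (𝕜 := ℝ) (F' := fun _ : Fin n => ℝ) i x).pow (α i)
    convert this using 1
    ext v
    simp
  rw [h.fderiv]
  simp [mul_assoc]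

lemma euler_monomial (α : Fin n → ℕ) (w x : Fin n → ℝ) :
    fderiv ℝ (monomial α) x (w * x) = (∑ i, w i * (α i : ℝ)) * monomial α x := by
  classical
  rw [fderiv_monomial, Finset.sum_mul]
  refine Finset.sum_congr rfl fun i _ => ?_
  have h : monomial α x = x i ^ α i * ∏ j ∈ Finset.univ.erase i, x j ^ α j :=
    (Finset.mul_prod_erase _ _ (Finset.mem_univ i)).symm
  rw [h]
  rcases Nat.eq_zero_or_pos (α i) with h0 | h0
  · simp [h0]
  · have : x i ^ α i = x i ^ (α i - 1) * x i := by
      rw [← pow_succ]; congr 1; omega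
    rw [this, Pi.mul_apply]
    ring

lemma fderiv_facePol (c : (Fin n → ℕ) → ℝ) (F0 : Finset (Fin n → ℕ)) (x v : Fin n → ℝ) :
    fderiv ℝ (facePol c F0) x v = ∑ α ∈ F0, c α * fderiv ℝ (monomial α) x v := by
  have h : HasFDerivAt (facePol c F0) (∑ α ∈ F0, c α • fderiv ℝ (monomial α) x) x :=
    HasFDerivAt.fun_sum fun α _ =>
      (((contDiff_monomial α (k := 1)).differentiable one_ne_zero x).hasFDerivAt).const_mul (c α)
  rw [h.fderiv]
  simp

lemma claimB {c : (Fin n → ℕ) → ℝ} {D F0 : Finset (Fin n → ℕ)} {w : Fin n → ℝ} {d : ℝ}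
    {b : (Fin n → ℕ) → (Fin n → ℕ)} (hD : ∀ β ∈ D, c β ≠ 0)
    (hb : ∀ α, c α ≠ 0 → b α ∈ D ∧ b α ≤ α) (H : FaceData c D F0 w d)
    (hc0 : c 0 = 0) (hc1 : ∀ i, c (Pi.single i 1) = 0)
    {oF : ℕ} (hoF : newtonOrder c = (oF : ℕ∞)) {x : Fin n → ℝ} (hx : ∀ i, x i ≠ 0) :
    ∃ a, 2 ≤ a ∧ a ≤ max 2 oF ∧ iteratedFDeriv ℝ a (facePol c F0) x ≠ 0 := by
  classical
  by_contra! hcon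
  set P := facePol c F0 with hP
  have hPs : ContDiff ℝ (⊤ : ℕ∞) P := contDiff_facePol c F0
  have h2 : fderiv ℝ (fderiv ℝ P) x = 0 := by
    ext v z
    have h := iteratedFDeriv_two_apply (𝕜 := ℝ) P x ![v, z]
    rw [hcon 2 le_rfl (le_max_left _ _)] at h
    simpa using h.symm
  have heuler : ∀ y, fderiv ℝ P y (w * y) = d * P y := by
    intro y
    rw [hP, fderiv_facePol, facePol, Finset.mul_sum]
    refine Finset.sum_congr rfl fun α hα => ?_
    rw [euler_monomial, H.eq α hα]
    ring
  have hdP : DifferentiableAt ℝ (fderiv ℝ P) x :=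
    ((hPs.fderiv_right (m := 1) (by exact natCast_le_top 2)).differentiable one_ne_zero) x
  have hP1 : DifferentiableAt ℝ P x := (hPs.differentiable (by simp)) x
  have hder : ∀ v, fderiv ℝ P x (w * v) = d * fderiv ℝ P x v := by
    intro v
    have hL : HasFDerivAt (fun y : Fin n → ℝ => w * y)
        ((scaleL w fun i => (H.pos i).ne' : (Fin n → ℝ) ≃L[ℝ] (Fin n → ℝ)) :
          (Fin n → ℝ) →L[ℝ] (Fin n → ℝ)) x := by
      have e : (fun y : Fin n → ℝ => w * y) = scaleL w fun i => (H.pos i).ne' := by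
        ext y; simp [scaleL_apply]
      rw [e]
      exact (scaleL w fun i => (H.pos i).ne').hasFDerivAt
    have h3 := hdP.hasFDerivAt.clm_apply hL
    have h4 : HasFDerivAt (fun y => fderiv ℝ P y (w * y)) (d • fderiv ℝ P x) x := by
      simp_rw [heuler]
      exact hP1.hasFDerivAt.const_mul d
    have h5 := congrArg (fun L => L v) (h3.unique h4)
    rw [h2] at h5
    simpa [scaleL_apply] using h5
  have hpart : ∀ j, fderiv ℝ P x (Pi.single j 1) = 0 := by
    intro j
    by_cases hdj : w j = d
    · rw [hP, fderiv_facePol]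
      refine Finset.sum_eq_zero fun α hα => ?_
      have hαj : α j = 0 := by
        by_contra hne
        have hle : ∀ i, (((Pi.single j 1 : Fin n → ℕ) i : ℕ) : ℝ) ≤ (α i : ℝ) := by
          intro i
          by_cases hi : i = j
          · subst hi
            simp only [Pi.single_eq_same]
            exact_mod_cast Nat.one_le_iff_ne_zero.mpr hne
          · simp [hi]
        have hs : ∑ i, w i * (((Pi.single j 1 : Fin n → ℕ) i : ℕ) : ℝ) = w j := by
          rw [Finset.sum_eq_single j]
          · simp
          · intro i _ hi
            simp [hi]
          · simp
        have h6 := dot_eq_of_le H.pos hle (by rw [hs, H.eq α hα, hdj])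
        have h7 : (Pi.single j 1 : Fin n → ℕ) = α := by
          ext i
          exact_mod_cast congrFun h6 i
        exact hD α (H.sub hα) (by rw [← h7]; exact hc1 j)
      rw [fderiv_monomial, Finset.sum_eq_zero, mul_zero]
      intro i _
      by_cases hi : i = j
      · subst hi; simp [hαj]
      · simp [hi]
    · have h3 := hder (Pi.single j 1)
      have h4 : w * (Pi.single j 1 : Fin n → ℝ) = w j • Pi.single j 1 := by
        ext i
        by_cases hi : i = j
        · subst hi; simp
        · simp [hi]
      rw [h4, map_smul, smul_eq_mul] at h3
      have h5 : (w j - d) * fderiv ℝ P x (Pi.single j 1) = 0 := by linarith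
      exact (mul_eq_zero.mp h5).resolve_left (sub_ne_zero.mpr hdj)
  have hD1 : fderiv ℝ P x = 0 := by
    ext v
    have : v = ∑ j, v j • (Pi.single j 1 : Fin n → ℝ) := by
      ext i
      simp [Finset.sum_apply, Pi.single_apply]
    rw [this, map_sum]
    simp [hpart]
  have hdpos : 0 < d := by
    obtain ⟨α, hα⟩ := H.nonempty
    rw [← H.eq α hα]
    have hne : α ≠ 0 := by
      rintro rfl
      exact hD 0 (H.sub hα) hc0
    obtain ⟨i, hi⟩ := Function.ne_iff.mp hne
    refine Finset.sum_pos' (fun j _ => mul_nonneg (H.pos j).le (Nat.cast_nonneg _)) ⟨i, Finset.mem_univ i, ?_⟩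
    exact mul_pos (H.pos i) (by exact_mod_cast Nat.pos_of_ne_zero hi)
  have hPx : P x = 0 := by
    have := heuler x
    rw [hD1] at this
    simp only [zero_apply] at this
    exact (mul_eq_zero.mp this.symm).resolve_left hdpos.ne'
  obtain ⟨a, ha, hne⟩ := claimA hD hb H hoF hx
  apply hne
  rcases Nat.lt_or_ge a 2 with h | h
  · interval_cases a
    · rw [← norm_eq_zero, norm_iteratedFDeriv_zero, norm_eq_zero]
      exact hPx
    · rw [← norm_eq_zero, norm_iteratedFDeriv_one, norm_eq_zero]
      exact hD1
  · exact hcon a h (ha.trans (le_max_right _ _))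

/-! ### Compactness and subdivision on the unit dyadic rectangle -/

/-- The lower corner of the unit dyadic rectangle. -/
def cornerOf (σ : Fin n → Bool) (i : Fin n) : ℝ := if σ i then 1 / 2 else -1

lemma dyadicRect_zero (σ : Fin n → Bool) :
    dyadicRect 0 σ = boxOf (cornerOf σ) (fun i => cornerOf σ i + 1 / 2) := by
  unfold dyadicRect boxOf cornerOf
  congr 1
  funext i
  by_cases h : σ i
  · simp only [h, if_true]
    norm_num
  · simp only [h]
    norm_num

lemma mem_boxOf {lo hi x : Fin n → ℝ} : x ∈ boxOf lo hi ↔ ∀ i, lo i ≤ x i ∧ x i ≤ hi i := by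
  simp only [boxOf, Set.mem_pi, Set.mem_univ, true_imp_iff, Set.mem_Icc]

lemma mem_unit_ne_zero {σ : Fin n → Bool} {x : Fin n → ℝ} (hx : x ∈ dyadicRect 0 σ) (i : Fin n) :
    x i ≠ 0 ∧ |x i| ≤ 1 := by
  rw [dyadicRect_zero, mem_boxOf] at hx
  have h := hx i
  unfold cornerOf at h
  split_ifs at h
  · exact ⟨by linarith, abs_le.mpr ⟨by linarith, by linarith⟩⟩
  · exact ⟨by linarith, abs_le.mpr ⟨by linarith, by linarith⟩⟩

lemma grid_one {L t h : ℝ} {N : ℕ} (hN : 0 < N) (hh : 0 < h) (h1 : L ≤ t) (h2 : t ≤ L + N * h) :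
    ∃ j : Fin N, L + j * h ≤ t ∧ t ≤ L + j * h + h := by
  by_cases hlt : ⌊(t - L) / h⌋₊ < N
  · refine ⟨⟨_, hlt⟩, ?_, ?_⟩
    · have := Nat.floor_le (div_nonneg (sub_nonneg.mpr h1) hh.le)
      rw [le_div_iff₀ hh] at this
      simp only
      linarith
    · have := Nat.lt_floor_add_one ((t - L) / h)
      rw [div_lt_iff₀ hh] at this
      simp only
      linarith
  · refine ⟨⟨N - 1, by omega⟩, ?_, ?_⟩
    · have h3 : (N : ℝ) ≤ (t - L) / h := (Nat.le_floor_iff (div_nonneg (sub_nonneg.mpr h1) hh.le)).mp (not_lt.mp hlt)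
      rw [le_div_iff₀ hh] at h3
      simp only
      rw [Nat.cast_sub (by omega : 1 ≤ N)]
      push_cast
      linarith
    · simp only
      rw [Nat.cast_sub (by omega : 1 ≤ N)]
      push_cast
      linarith

lemma grid (σ : Fin n → Bool) {δ : ℝ} (hδ : 0 < δ) :
    ∃ (J : ℕ) (lo hi : Fin J → Fin n → ℝ), (⋃ j, boxOf (lo j) (hi j)) = dyadicRect 0 σ ∧
      ∀ j, lo j ∈ dyadicRect 0 σ ∧ boxOf (lo j) (hi j) ⊆ Metric.ball (lo j) δ := by
  classical
  obtain ⟨N, hN⟩ := exists_nat_gt (1 / δ)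
  have hN0 : (0 : ℝ) < N := (by positivity : (0 : ℝ) < 1 / δ).trans hN
  have hNn : 0 < N := by exact_mod_cast hN0
  set h : ℝ := 1 / (2 * N) with hh
  have hh0 : 0 < h := by positivity
  have hNh : (N : ℝ) * h = 1 / 2 := by rw [hh]; field_simp
  have hhδ : h < δ := by
    rw [div_lt_iff₀ hδ] at hN
    rw [hh, div_lt_iff₀ (by positivity)]
    nlinarith
  let e := (Fintype.equivFin (Fin n → Fin N)).symm
  have hjN : ∀ j : Fin N, (j : ℝ) * h + h ≤ 1 / 2 := by
    intro j
    rw [← hNh]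
    have : (j : ℝ) + 1 ≤ N := by exact_mod_cast j.2
    nlinarith
  refine ⟨_, fun j i => cornerOf σ i + (e j i : ℕ) * h, fun j i => cornerOf σ i + (e j i : ℕ) * h + h, ?_, ?_⟩
  · ext x
    rw [Set.mem_iUnion, dyadicRect_zero]
    simp only [mem_boxOf]
    constructor
    · rintro ⟨j, hj⟩ i
      obtain ⟨h1, h2⟩ := hj i
      have := hjN (e j i)
      have h0 : 0 ≤ ((e j i : ℕ) : ℝ) * h := by positivity
      constructor <;> linarith
    · intro hx
      have : ∀ i, ∃ j : Fin N, cornerOf σ i + j * h ≤ x i ∧ x i ≤ cornerOf σ i + j * h + h :=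
        fun i => grid_one hNn hh0 (hx i).1 (by rw [hNh]; exact (hx i).2)
      choose g hg using this
      refine ⟨e.symm g, fun i => ?_⟩
      rw [Equiv.apply_symm_apply]
      exact hg i
  · intro j
    constructor
    · rw [dyadicRect_zero, mem_boxOf]
      intro i
      have := hjN (e j i)
      have h0 : 0 ≤ ((e j i : ℕ) : ℝ) * h := by positivity
      constructor <;> linarith
    · intro x hx
      rw [mem_boxOf] at hx
      rw [mem_ball_iff_norm]
      refine lt_of_le_of_lt ((pi_norm_le_iff_of_nonneg hh0.le).mpr fun i => ?_) hhδ
      obtain ⟨h1, h2⟩ := hx i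
      rw [Real.norm_eq_abs, Pi.sub_apply, abs_le]
      constructor <;> linarith

lemma compact_unit (σ : Fin n → Bool) : IsCompact (dyadicRect 0 σ) := by
  rw [dyadicRect_zero]
  exact isCompact_univ_pi fun i => isCompact_Icc

lemma subdivision (σ : Fin n → Bool) {G : (Fin n → ℝ) → ℝ} (hG : ContDiff ℝ (⊤ : WithTop ℕ∞) G) {oF : ℕ}
    (hA : ∀ x, (∀ i, x i ≠ 0) → ∃ a ≤ oF, iteratedFDeriv ℝ a G x ≠ 0)
    (hB : ∀ x, (∀ i, x i ≠ 0) → ∃ a, 2 ≤ a ∧ a ≤ max 2 oF ∧ iteratedFDeriv ℝ a G x ≠ 0) :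
    ∃ (J : ℕ) (lo hi : Fin J → Fin n → ℝ) (q : ℝ), 0 < q ∧
      (⋃ j, boxOf (lo j) (hi j)) = dyadicRect 0 σ ∧
      ∀ j, (∃ a ≤ oF, ∃ z : Fin n → ℝ, (∀ i, |z i| ≤ 1) ∧
          ∀ u ∈ boxOf (lo j) (hi j), q ≤ |iteratedFDeriv ℝ a G u fun _ => z|) ∧
        (∃ a, 2 ≤ a ∧ a ≤ max 2 oF ∧ ∃ z : Fin n → ℝ, (∀ i, |z i| ≤ 1) ∧
          ∀ u ∈ boxOf (lo j) (hi j), q ≤ |iteratedFDeriv ℝ a G u fun _ => z|) := by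
  classical
  have hcont : ∀ (a : ℕ) (z : Fin n → ℝ), Continuous fun u => |iteratedFDeriv ℝ a G u fun _ => z| := by
    intro a z
    have h1 : Continuous (iteratedFDeriv ℝ a G) := hG.continuous_iteratedFDeriv (by exact le_top)
    exact ((ContinuousMultilinearMap.apply ℝ (fun _ : Fin a => Fin n → ℝ) ℝ
      (fun _ => z)).continuous.comp h1).abs
  have hdata : ∀ x : dyadicRect 0 σ, ∃ (a : ℕ) (z : Fin n → ℝ) (a' : ℕ) (z' : Fin n → ℝ) (q : ℝ),
      0 < q ∧ a ≤ oF ∧ (∀ i, |z i| ≤ 1) ∧ 2 ≤ a' ∧ a' ≤ max 2 oF ∧ (∀ i, |z' i| ≤ 1) ∧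
      q < |iteratedFDeriv ℝ a G x fun _ => z| ∧ q < |iteratedFDeriv ℝ a' G x fun _ => z'| := by
    rintro ⟨x, hx⟩
    have hx0 := fun i => (mem_unit_ne_zero hx i).1
    obtain ⟨a, ha, hne⟩ := hA x hx0
    obtain ⟨z, hz, hz0⟩ := exists_diag_ne_zero hG.contDiffAt hne
    obtain ⟨a', ha2, ha', hne'⟩ := hB x hx0
    obtain ⟨z', hz', hz0'⟩ := exists_diag_ne_zero hG.contDiffAt hne'
    obtain ⟨q, hq0, hq⟩ := exists_between (lt_min (abs_pos.mpr hz0) (abs_pos.mpr hz0'))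
    exact ⟨a, z, a', z', q, hq0, ha, hz, ha2, ha', hz', hq.trans_le (min_le_left _ _),
      hq.trans_le (min_le_right _ _)⟩
  choose a z a' z' q hq0 ha hz ha2 ha' hz' hq hq' using hdata
  obtain ⟨δ, hδ, hleb⟩ := lebesgue_number_lemma_of_metric (compact_unit σ)
    (c := fun x : dyadicRect 0 σ => {u | q x < |iteratedFDeriv ℝ (a x) G u fun _ => z x| ∧
      q x < |iteratedFDeriv ℝ (a' x) G u fun _ => z' x|})
    (fun x => (isOpen_lt continuous_const (hcont _ _)).inter (isOpen_lt continuous_const (hcont _ _)))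
    (fun x hx => Set.mem_iUnion.mpr ⟨⟨x, hx⟩, hq _, hq' _⟩)
  obtain ⟨J, lo, hi, hU, hbox⟩ := grid σ hδ
  choose X hX using fun j => hleb (lo j) (hbox j).1
  obtain ⟨Q, hQ0, hQ⟩ : ∃ Q : ℝ, 0 < Q ∧ ∀ j, Q ≤ q (X j) := by
    rcases Nat.eq_zero_or_pos J with rfl | hJ
    · exact ⟨1, one_pos, fun j => j.elim0⟩
    · have : Nonempty (Fin J) := ⟨⟨0, hJ⟩⟩
      obtain ⟨j0, hj0⟩ := Finite.exists_min fun j => q (X j)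
      exact ⟨_, hq0 _, hj0⟩
  refine ⟨J, lo, hi, Q, hQ0, hU, fun j => ⟨⟨a (X j), ha _, z (X j), hz _, fun u hu => ?_⟩,
    ⟨a' (X j), ha2 _, ha' _, z' (X j), hz' _, fun u hu => ?_⟩⟩⟩
  · exact (hQ j).trans (hX j ((hbox j).2 hu)).1.le
  · exact (hQ j).trans (hX j ((hbox j).2 hu)).2.le

/-! ### Extraction of a limiting face along an ultrafilter -/

/-- The dyadic scales. -/
def sc (k : Fin n → ℤ) (i : Fin n) : ℝ := (2 : ℝ) ^ (-(k i))

/-- The pairing of a scale vector with an exponent. -/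
def dotZ (k : Fin n → ℤ) (α : Fin n → ℕ) : ℤ := ∑ i, k i * (α i : ℤ)

lemma sc_pos (k : Fin n → ℤ) (i : Fin n) : 0 < sc k i := zpow_pos (by norm_num) _

lemma monomial_pos (α : Fin n → ℕ) {s : Fin n → ℝ} (hs : ∀ i, 0 < s i) : 0 < monomial α s :=
  Finset.prod_pos fun i _ => pow_pos (hs i) _

lemma zpow_sum_two {κ : Type*} (S : Finset κ) (g : κ → ℤ) :
    ∏ i ∈ S, (2 : ℝ) ^ (g i) = (2 : ℝ) ^ (∑ i ∈ S, g i) := by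
  classical
  induction S using Finset.induction_on with
  | empty => simp
  | insert a S ha ih => rw [Finset.prod_insert ha, Finset.sum_insert ha, ih, zpow_add₀ (by norm_num)]

lemma monomial_sc (α : Fin n → ℕ) (k : Fin n → ℤ) :
    monomial α (sc k) = (2 : ℝ) ^ (-(dotZ k α)) := by
  unfold monomial sc dotZ
  rw [← Finset.sum_neg_distrib, ← zpow_sum_two]
  refine Finset.prod_congr rfl fun i _ => ?_
  rw [← zpow_natCast, ← zpow_mul]
  congr 1
  ring

lemma monomial_sc_div (α α0 : Fin n → ℕ) (k : Fin n → ℤ) :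
    monomial α (sc k) / monomial α0 (sc k) = (2 : ℝ) ^ (-(dotZ k α - dotZ k α0)) := by
  rw [monomial_sc, monomial_sc, ← zpow_sub₀ (by norm_num)]
  congr 1
  ring

lemma ultra_const {ι : Type*} (l : Ultrafilter ι) (e : ι → ℤ) (h0 : ∀ᶠ i in (l : Filter ι), 0 ≤ e i) :
    (∃ E, ∀ᶠ i in (l : Filter ι), e i = E) ∨ Tendsto e (l : Filter ι) atTop := by
  by_cases h : Tendsto e (l : Filter ι) atTop
  · exact Or.inr h
  · left
    rw [tendsto_atTop] at h
    push Not at h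
    obtain ⟨B, hB⟩ := h
    have hB' : ∀ᶠ i in (l : Filter ι), ¬ B ≤ e i := by
      filter_upwards [hB] with i hi
      exact not_le.mpr hi
    have h1 : ∀ᶠ i in (l : Filter ι), ∃ E ∈ Set.Icc 0 B, e i = E := by
      filter_upwards [h0, hB'] with i hi1 hi2
      exact ⟨e i, ⟨hi1, by omega⟩, rfl⟩
    obtain ⟨E, _, hE⟩ := (Ultrafilter.eventually_exists_mem_iff (Set.finite_Icc 0 B)).mp h1
    exact ⟨E, hE⟩

lemma extract_face (l : Ultrafilter ℕ) (hl : (l : Filter ℕ) ≤ atTop) (k : ℕ → Fin n → ℤ)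
    (hk : ∀ (M : ℕ) i, (M : ℤ) < k M i) (c : (Fin n → ℕ) → ℝ) (D : Finset (Fin n → ℕ))
    (hD : D.Nonempty) :
    ∃ (α0 : Fin n → ℕ) (F0 : Finset (Fin n → ℕ)) (w : Fin n → ℝ) (d : ℝ) (k0 : Fin n → ℤ),
      α0 ∈ D ∧ FaceData c D F0 w d ∧
      (∀ᶠ M in (l : Filter ℕ), ∀ β ∈ D, monomial β (sc (k M)) ≤ monomial α0 (sc (k M))) ∧
      (∀ β ∈ F0, Tendsto (fun M => monomial β (sc (k M)) / monomial α0 (sc (k M))) l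
        (𝓝 (monomial β (sc k0) / monomial α0 (sc k0)))) ∧
      (∀ β ∈ D, β ∉ F0 →
        Tendsto (fun M => monomial β (sc (k M)) / monomial α0 (sc (k M))) l (𝓝 0)) := by
  classical
  have h1 : ∀ᶠ M in (l : Filter ℕ), ∃ α ∈ (D : Set (Fin n → ℕ)), ∀ β ∈ D, dotZ (k M) α ≤ dotZ (k M) β :=
    Eventually.of_forall fun M => D.exists_min_image (dotZ (k M)) hD
  obtain ⟨α0, hα0, hmin⟩ := (Ultrafilter.eventually_exists_mem_iff D.finite_toSet).mp h1
  have hdich : ∀ β ∈ D, (∃ E, ∀ᶠ M in (l : Filter ℕ), dotZ (k M) β - dotZ (k M) α0 = E) ∨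
      Tendsto (fun M => dotZ (k M) β - dotZ (k M) α0) (l : Filter ℕ) atTop := fun β hβ =>
    ultra_const l _ (by filter_upwards [hmin] with M hM; have := hM β hβ; omega)
  let F0 := D.filter fun β => ∃ E, ∀ᶠ M in (l : Filter ℕ), dotZ (k M) β - dotZ (k M) α0 = E
  have hF0 : ∀ β ∈ F0, ∃ E, ∀ᶠ M in (l : Filter ℕ), dotZ (k M) β - dotZ (k M) α0 = E :=
    fun β hβ => (Finset.mem_filter.mp hβ).2
  have hE : ∃ E : (Fin n → ℕ) → ℤ, ∀ β ∈ F0, ∀ᶠ M in (l : Filter ℕ), dotZ (k M) β - dotZ (k M) α0 = E β := by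
    choose! E hE using hF0
    exact ⟨E, hE⟩
  obtain ⟨E, hE⟩ := hE
  have hEall : ∀ᶠ M in (l : Filter ℕ), ∀ β ∈ F0, dotZ (k M) β - dotZ (k M) α0 = E β :=
    (Finset.eventually_all F0).mpr hE
  have hout : ∀ β ∈ D, β ∉ F0 → Tendsto (fun M => dotZ (k M) β - dotZ (k M) α0) (l : Filter ℕ) atTop := by
    intro β hβ hn
    refine (hdich β hβ).resolve_left fun h => hn (Finset.mem_filter.mpr ⟨hβ, h⟩)
  obtain ⟨M0, hM0⟩ := hEall.exists
  have hbig : ∀ᶠ M in (l : Filter ℕ), ∀ i, k M0 i < k M i := by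
    refine eventually_all.mpr fun i => ?_
    filter_upwards [hl (eventually_ge_atTop (k M0 i).toNat)] with M hM
    have h2 := hk M i
    have h3 := Int.self_le_toNat (k M0 i)
    have h4 : ((k M0 i).toNat : ℤ) ≤ M := by exact_mod_cast hM
    omega
  have hout2 : ∀ᶠ M in (l : Filter ℕ), ∀ β ∈ D.filter (fun β => β ∉ F0),
      dotZ (k M0) β - dotZ (k M0) α0 < dotZ (k M) β - dotZ (k M) α0 :=
    (Finset.eventually_all _).mpr fun β hβ =>
      (hout β (Finset.mem_filter.mp hβ).1 (Finset.mem_filter.mp hβ).2).eventually_gt_atTop _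
  obtain ⟨M1, hM1E, hM1b, hM1o⟩ := (hEall.and (hbig.and hout2)).exists
  have hdot : ∀ α : Fin n → ℕ, ∑ i, (((k M1 i - k M0 i : ℤ)) : ℝ) * (α i : ℝ) =
      ((dotZ (k M1) α - dotZ (k M0) α : ℤ) : ℝ) := by
    intro α
    unfold dotZ
    rw [← Finset.sum_sub_distrib]
    push_cast
    refine Finset.sum_congr rfl fun i _ => ?_
    ring
  have hFaceF : α0 ∈ F0 := Finset.mem_filter.mpr ⟨hα0, 0, Eventually.of_forall fun M => sub_self _⟩
  refine ⟨α0, F0, fun i => ((k M1 i - k M0 i : ℤ) : ℝ),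
    ((dotZ (k M1) α0 - dotZ (k M0) α0 : ℤ) : ℝ), k M0, hα0, ?_, ?_, ?_, ?_⟩
  · refine ⟨Finset.filter_subset _ _, ⟨α0, hFaceF⟩, fun i => ?_, fun α hα => ?_, fun α hα hn => ?_⟩
    · have := hM1b i
      exact_mod_cast (by omega : 0 < k M1 i - k M0 i)
    · rw [hdot]
      have h2 := hM1E α hα
      have h3 := hM0 α hα
      congr 1
      omega
    · rw [hdot]
      have h2 := hM1o α (Finset.mem_filter.mpr ⟨hα, hn⟩)
      exact_mod_cast (by omega : dotZ (k M1) α0 - dotZ (k M0) α0 < dotZ (k M1) α - dotZ (k M0) α)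
  · filter_upwards [hmin] with M hM β hβ
    rw [monomial_sc, monomial_sc]
    exact zpow_le_zpow_right₀ (by norm_num) (by have := hM β hβ; omega)
  · intro β hβ
    refine tendsto_const_nhds.congr' ?_
    filter_upwards [hE β hβ] with M hM
    rw [monomial_sc_div, monomial_sc_div, hM, hM0 β hβ]
  · intro β hβ hn
    simp_rw [monomial_sc_div]
    have h2 : Tendsto (fun j : ℤ => (2 : ℝ) ^ (-j)) atTop (𝓝 0) := by
      have : (fun j : ℤ => (2 : ℝ) ^ (-j)) = fun j => ((2 : ℝ) ^ j)⁻¹ := by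
        funext j; rw [zpow_neg]
      rw [this]
      refine Tendsto.inv_tendsto_atTop ?_
      refine tendsto_atTop_mono' _ ?_ (tendsto_intCast_atTop_atTop (R := ℝ))
      filter_upwards [eventually_ge_atTop (0 : ℤ)] with j hj
      lift j to ℕ using hj
      rw [zpow_natCast]
      exact_mod_cast Nat.lt_two_pow_self.le
    exact h2.comp (hout β hβ hn)

/-! ### Transfer to the original function and conclusion -/

/-- The conclusion of the lemma for a single dyadic rectangle. -/
def Good (f : (Fin n → ℝ) → ℝ) (c : (Fin n → ℕ) → ℝ) (oF K : ℕ) (η : ℝ) (k : Fin n → ℤ)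
    (σ : Fin n → Bool) : Prop :=
  ∃ J : ℕ, J ≤ K ∧ ∃ lo hi : Fin J → Fin n → ℝ,
    (⋃ j, boxOf (lo j) (hi j)) = dyadicRect k σ ∧
    ∀ j : Fin J,
      (∃ aDeg : ℕ, aDeg ≤ oF ∧ ∃ y : Fin n → ℝ,
        (∀ i, |y i| ≤ (2 : ℝ) ^ (-(k i))) ∧
        ∀ x ∈ boxOf (lo j) (hi j),
          η * sSup (starFn c '' boxOf (lo j) (hi j)) ≤
            |iteratedFDeriv ℝ aDeg f x fun _ => y|) ∧
      (∃ aDeg : ℕ, 2 ≤ aDeg ∧ aDeg ≤ max 2 oF ∧ ∃ y : Fin n → ℝ,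
        (∀ i, |y i| ≤ (2 : ℝ) ^ (-(k i))) ∧
        ∀ x ∈ boxOf (lo j) (hi j),
          η * sSup (starFn c '' boxOf (lo j) (hi j)) ≤
            |iteratedFDeriv ℝ aDeg f x fun _ => y|)

lemma starFn_nonneg (c : (Fin n → ℕ) → ℝ) (t : Fin n → ℝ) : 0 ≤ starFn c t :=
  tsum_nonneg fun _ => Finset.prod_nonneg fun _ _ => Real.rpow_nonneg (abs_nonneg _) _

lemma Good.mono {f : (Fin n → ℝ) → ℝ} {c : (Fin n → ℕ) → ℝ} {oF K K' : ℕ} {η η' : ℝ}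
    {k : Fin n → ℤ} {σ : Fin n → Bool} (h : Good f c oF K η k σ) (hK : K ≤ K') (hη : η' ≤ η) :
    Good f c oF K' η' k σ := by
  obtain ⟨J, hJ, lo, hi, hU, hall⟩ := h
  have hs : ∀ S : Set (Fin n → ℝ), η' * sSup (starFn c '' S) ≤ η * sSup (starFn c '' S) := fun S =>
    mul_le_mul_of_nonneg_right hη (Real.sSup_nonneg (by
      rintro _ ⟨x, _, rfl⟩
      exact starFn_nonneg c x))
  refine ⟨J, hJ.trans hK, lo, hi, hU, fun j => ⟨?_, ?_⟩⟩
  · obtain ⟨a, ha, y, hy, hx⟩ := (hall j).1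
    exact ⟨a, ha, y, hy, fun x hx' => (hs _).trans (hx x hx')⟩
  · obtain ⟨a, ha2, ha, y, hy, hx⟩ := (hall j).2
    exact ⟨a, ha2, ha, y, hy, fun x hx' => (hs _).trans (hx x hx')⟩

lemma exists_unscale (k : Fin n → ℤ) (x : Fin n → ℝ) : ∃ u, sc k * u = x := by
  refine ⟨fun i => (sc k i)⁻¹ * x i, ?_⟩
  ext i
  simp only [Pi.mul_apply]
  rw [mul_inv_cancel_left₀ (sc_pos k i).ne']

lemma mem_box_scale (k : Fin n → ℤ) {lo hi u : Fin n → ℝ} :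
    sc k * u ∈ boxOf (sc k * lo) (sc k * hi) ↔ u ∈ boxOf lo hi := by
  simp only [mem_boxOf, Pi.mul_apply, mul_le_mul_iff_right₀ (sc_pos k _)]

lemma mem_dyadic_scale (k : Fin n → ℤ) {σ : Fin n → Bool} {u : Fin n → ℝ} :
    sc k * u ∈ dyadicRect k σ ↔ u ∈ dyadicRect 0 σ := by
  have e : dyadicRect k σ = boxOf (sc k * cornerOf σ) (sc k * fun i => cornerOf σ i + 1 / 2) := by
    unfold dyadicRect boxOf
    congr 1
    funext i
    have h2 : (2 : ℝ) ^ (-(k i) - 1) = sc k i * (1 / 2) := by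
      rw [zpow_sub_one₀ (by norm_num), sc]; norm_num
    have h1 : (2 : ℝ) ^ (-(k i)) = sc k i := rfl
    rw [h2, h1]
    simp only [Pi.mul_apply, cornerOf]
    split_ifs
    · congr 1; ring
    · congr 1 <;> ring
  rw [e, mem_box_scale, dyadicRect_zero]

lemma core_estimate {k : Fin n → ℤ} {f G : (Fin n → ℝ) → ℝ} (hG : ContDiff ℝ (⊤ : WithTop ℕ∞) G)
    {μ q : ℝ} (hμ : 0 < μ) {a : ℕ} {u z : Fin n → ℝ} (hz : ∀ i, |z i| ≤ 1)
    (hφs : ContDiffAt ℝ a (fun v => μ⁻¹ * f (sc k * v) - G v) u)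
    (hφb : ‖iteratedFDeriv ℝ a (fun v => μ⁻¹ * f (sc k * v) - G v) u‖ ≤ q / 2)
    (hq : q ≤ |iteratedFDeriv ℝ a G u fun _ => z|) :
    μ * (q / 2) ≤ |iteratedFDeriv ℝ a f (sc k * u) fun _ => sc k * z| := by
  set φ := fun v => μ⁻¹ * f (sc k * v) - G v with hφ
  have e : (fun v => f (sc k * v)) = μ • (φ + G) := by
    funext v
    simp only [hφ, Pi.smul_apply, Pi.add_apply, smul_eq_mul, sub_add_cancel]
    rw [mul_inv_cancel_left₀ hμ.ne']
  have hGa : ContDiffAt ℝ a G u := (hG.of_le le_top).contDiffAt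
  rw [← iteratedFDeriv_scale_apply (sc k) (fun i => (sc_pos k i).ne'), e,
    iteratedFDeriv_const_smul_apply (show ContDiffAt ℝ a (φ + G) u from hφs.add hGa), iteratedFDeriv_add_apply hφs hGa]
  have h1 : |iteratedFDeriv ℝ a φ u fun _ => z| ≤ q / 2 := by
    have h2 := (iteratedFDeriv ℝ a φ u).le_opNorm fun _ => z
    have h3 : ∏ _i : Fin a, ‖z‖ ≤ 1 := by
      refine Finset.prod_le_one (fun _ _ => norm_nonneg _) fun _ _ => ?_
      exact (pi_norm_le_iff_of_nonneg zero_le_one).mpr hz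
    calc |iteratedFDeriv ℝ a φ u fun _ => z| ≤ _ := h2
      _ ≤ ‖iteratedFDeriv ℝ a φ u‖ * 1 := by gcongr
      _ ≤ q / 2 := by rw [mul_one]; exact hφb
  have h4 : (μ • (iteratedFDeriv ℝ a φ u + iteratedFDeriv ℝ a G u)) (fun _ => z) =
      μ * ((iteratedFDeriv ℝ a φ u fun _ => z) + iteratedFDeriv ℝ a G u fun _ => z) := rfl
  rw [h4, abs_mul, abs_of_pos hμ]
  refine mul_le_mul_of_nonneg_left ?_ hμ.le
  have h5 := abs_sub_abs_le_abs_sub (iteratedFDeriv ℝ a G u fun _ => z) (-(iteratedFDeriv ℝ a φ u fun _ => z))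
  rw [abs_neg, sub_neg_eq_add, add_comm (iteratedFDeriv ℝ a G u fun _ => z)] at h5
  linarith

lemma transfer {k : Fin n → ℤ} {σ : Fin n → Bool} {f G : (Fin n → ℝ) → ℝ}
    {c : (Fin n → ℕ) → ℝ} {oF : ℕ} (hG : ContDiff ℝ (⊤ : WithTop ℕ∞) G)
    {J : ℕ} {lo hi : Fin J → Fin n → ℝ} {q : ℝ} (hq : 0 < q)
    (hU : (⋃ j, boxOf (lo j) (hi j)) = dyadicRect 0 σ)
    (hbox : ∀ j, (∃ a ≤ oF, ∃ z : Fin n → ℝ, (∀ i, |z i| ≤ 1) ∧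
          ∀ u ∈ boxOf (lo j) (hi j), q ≤ |iteratedFDeriv ℝ a G u fun _ => z|) ∧
        (∃ a, 2 ≤ a ∧ a ≤ max 2 oF ∧ ∃ z : Fin n → ℝ, (∀ i, |z i| ≤ 1) ∧
          ∀ u ∈ boxOf (lo j) (hi j), q ≤ |iteratedFDeriv ℝ a G u fun _ => z|))
    {μ A : ℝ} (hμ : 0 < μ) (hA : 0 < A)
    (hstar : ∀ u : Fin n → ℝ, (∀ i, |u i| ≤ 1) → starFn c (sc k * u) ≤ A * μ)
    (hφs : ∀ u ∈ Metric.ball (0 : Fin n → ℝ) 2,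
      ContDiffAt ℝ (max 2 oF : ℕ) (fun v => μ⁻¹ * f (sc k * v) - G v) u)
    (hφb : ∀ a ≤ max 2 oF, ∀ u ∈ Metric.ball (0 : Fin n → ℝ) 2,
      ‖iteratedFDeriv ℝ a (fun v => μ⁻¹ * f (sc k * v) - G v) u‖ ≤ q / 2) :
    Good f c oF J (q / 2 / A) k σ := by
  have hsubQ : ∀ j, ∀ u ∈ boxOf (lo j) (hi j), u ∈ dyadicRect 0 σ := fun j u hu => by
    rw [← hU]; exact Set.mem_iUnion.mpr ⟨j, hu⟩
  have hball : ∀ u ∈ dyadicRect 0 σ, u ∈ Metric.ball (0 : Fin n → ℝ) 2 := by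
    intro u hu
    rw [mem_ball_zero_iff]
    refine lt_of_le_of_lt ((pi_norm_le_iff_of_nonneg zero_le_one).mpr fun i => ?_) one_lt_two
    exact (mem_unit_ne_zero hu i).2
  have hsup : ∀ j, q / 2 / A * sSup (starFn c '' boxOf (sc k * lo j) (sc k * hi j)) ≤ μ * (q / 2) := by
    intro j
    have h1 : sSup (starFn c '' boxOf (sc k * lo j) (sc k * hi j)) ≤ A * μ := by
      refine Real.sSup_le ?_ (by positivity)
      rintro _ ⟨x, hx, rfl⟩
      obtain ⟨u, rfl⟩ := exists_unscale k x
      rw [mem_box_scale] at hx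
      exact hstar u fun i => (mem_unit_ne_zero (hsubQ j u hx) i).2
    calc _ ≤ q / 2 / A * (A * μ) := by gcongr
      _ = μ * (q / 2) := by field_simp
  have hyz : ∀ z : Fin n → ℝ, (∀ i, |z i| ≤ 1) → ∀ i, |(sc k * z) i| ≤ (2 : ℝ) ^ (-(k i)) := by
    intro z hz i
    rw [Pi.mul_apply, abs_mul, abs_of_pos (sc_pos k i)]
    exact mul_le_of_le_one_right (sc_pos k i).le (hz i)
  have hest : ∀ j (a : ℕ) (z : Fin n → ℝ), a ≤ max 2 oF → (∀ i, |z i| ≤ 1) →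
      (∀ u ∈ boxOf (lo j) (hi j), q ≤ |iteratedFDeriv ℝ a G u fun _ => z|) →
      ∀ x ∈ boxOf (sc k * lo j) (sc k * hi j),
        q / 2 / A * sSup (starFn c '' boxOf (sc k * lo j) (sc k * hi j)) ≤
            |iteratedFDeriv ℝ a f x fun _ => sc k * z| := by
    intro j a z ha hz hqz x hx
    obtain ⟨u, rfl⟩ := exists_unscale k x
    rw [mem_box_scale] at hx
    have hub := hball u (hsubQ j u hx)
    refine (hsup j).trans (core_estimate hG hμ hz ?_ (hφb a ha u hub) (hqz u hx))
    exact (hφs u hub).of_le (by exact_mod_cast ha)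
  refine ⟨J, le_rfl, fun j => sc k * lo j, fun j => sc k * hi j, ?_, fun j => ⟨?_, ?_⟩⟩
  · ext x
    obtain ⟨u, rfl⟩ := exists_unscale k x
    rw [mem_dyadic_scale, ← hU]
    simp only [Set.mem_iUnion, mem_box_scale]
  · obtain ⟨a, ha, z, hz, hqz⟩ := (hbox j).1
    exact ⟨a, ha, sc k * z, hyz z hz, hest j a z (ha.trans (le_max_right _ _)) hz hqz⟩
  · obtain ⟨a, ha2, ha, z, hz, hqz⟩ := (hbox j).2
    exact ⟨a, ha2, ha, sc k * z, hyz z hz, hest j a z ha hz hqz⟩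

/-- Nonvanishing of derivatives passes to rescaled polynomials. -/
lemma rescaled_ne_zero {P G : (Fin n → ℝ) → ℝ} (hP : ContDiff ℝ (⊤ : WithTop ℕ∞) P)
    {k : Fin n → ℤ} {t : ℝ} (ht : t ≠ 0) (hG : ∀ u, G u = t * P (sc k * u)) {a : ℕ}
    {u : Fin n → ℝ} (h : iteratedFDeriv ℝ a P (sc k * u) ≠ 0) : iteratedFDeriv ℝ a G u ≠ 0 := by
  obtain ⟨z, _, hz⟩ := exists_diag_ne_zero hP.contDiffAt h
  obtain ⟨z', rfl⟩ := exists_unscale k z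
  rw [← iteratedFDeriv_scale_apply (sc k) (fun i => (sc_pos k i).ne')] at hz
  have e : G = t • fun u => P (sc k * u) := by
    funext u; exact hG u
  intro h0
  apply hz
  have hs : ContDiffAt ℝ a (fun v => P (sc k * v)) u :=
    contDiffAt_scale (hP.of_le le_top).contDiffAt
  rw [e, iteratedFDeriv_const_smul_apply hs] at h0
  rw [(smul_eq_zero.mp h0).resolve_left ht]
  rfl

lemma Small.congr {ι : Type*} {l : Filter ι} {φ ψ : ι → (Fin n → ℝ) → ℝ} (h : Small m l φ)
    (he : ∀ᶠ i in l, ∀ u ∈ Metric.ball (0 : Fin n → ℝ) 2, φ i u = ψ i u) : Small m l ψ := by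
  have key : ∀ {p q : (Fin n → ℝ) → ℝ}, (∀ u ∈ Metric.ball (0 : Fin n → ℝ) 2, p u = q u) →
      ∀ u ∈ Metric.ball (0 : Fin n → ℝ) 2, p =ᶠ[𝓝 u] q := by
    intro p q hpq u hu
    filter_upwards [Metric.isOpen_ball.mem_nhds hu] with v hv
    exact hpq v hv
  refine ⟨?_, fun a ha ε hε => ?_⟩
  · filter_upwards [h.1, he] with i h1 h2 u hu
    exact (h1 u hu).congr_of_eventuallyEq (key h2 u hu).symm
  · filter_upwards [h.2 a ha ε hε, he] with i h1 h2 u hu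
    rw [← (Filter.EventuallyEq.iteratedFDeriv ℝ (key h2 u hu) a).self_of_nhds]
    exact h1 u hu

lemma k_gt {k : Fin n → ℤ} {σ : Fin n → Bool} {M : ℕ}
    (h : dyadicRect k σ ⊆ Metric.ball (0 : Fin n → ℝ) ((2 : ℝ) ^ (-(M : ℤ)))) (i : Fin n) :
    (M : ℤ) < k i := by
  have h1 : (fun i => if σ i then sc k i else -sc k i) ∈ dyadicRect k σ := by
    intro j _
    have h2 : (2 : ℝ) ^ (-(k j) - 1) ≤ sc k j := zpow_le_zpow_right₀ (by norm_num) (by omega)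
    have h3 : (2 : ℝ) ^ (-(k j)) = sc k j := rfl
    beta_reduce
    rw [h3]
    by_cases hj : σ j
    · simp only [hj, if_true]
      exact ⟨h2, le_rfl⟩
    · simp only [hj]
      exact ⟨le_rfl, neg_le_neg h2⟩
  have h4 := h h1
  rw [mem_ball_zero_iff] at h4
  have h5 := lt_of_le_of_lt (norm_le_pi_norm _ i) h4
  have h6 : ‖(if σ i then sc k i else -sc k i)‖ = sc k i := by
    split_ifs
    · exact abs_of_pos (sc_pos k i)
    · rw [norm_neg]; exact abs_of_pos (sc_pos k i)
  rw [h6, sc] at h5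
  have := (zpow_lt_zpow_iff_right₀ (by norm_num : (1 : ℝ) < 2)).mp h5
  omega

lemma small_difference {f : (Fin n → ℝ) → ℝ} {c : (Fin n → ℕ) → ℝ} {mm : ℕ}
    {D : Finset (Fin n → ℕ)} {b : (Fin n → ℕ) → (Fin n → ℕ)}
    (hb : ∀ α, c α ≠ 0 → b α ∈ D ∧ b α ≤ α)
    {h : (Fin n → ℕ) → (Fin n → ℝ) → ℝ} {R : (Fin n → ℝ) → ℝ} {N : ℕ}
    (hh : ∀ β ∈ D, ContDiffAt ℝ (⊤ : ℕ∞) (h β) 0 ∧ h β 0 = c β)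
    (hR : ContDiffAt ℝ (⊤ : ℕ∞) R 0)
    (hdecay : ∀ a ≤ mm, ∃ C, ∀ᶠ x in 𝓝 (0 : Fin n → ℝ),
      ‖iteratedFDeriv ℝ a R x‖ ≤ C * ‖x‖ ^ (N + 1))
    (hf : ∀ᶠ x in 𝓝 (0 : Fin n → ℝ), f x = ∑ β ∈ D, monomial β x * h β x + R x)
    (hR0 : R = 0 ∨ ∀ i, ∃ p ≤ N, c (Pi.single i p) ≠ 0)
    (hn : 0 < n) {l : Filter ℕ} {s : ℕ → Fin n → ℝ} (hs : Tendsto s l (𝓝 0))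
    (hspos : ∀ M i, 0 < s M i) {α0 : Fin n → ℕ}
    (hmax : ∀ᶠ M in l, ∀ β ∈ D, monomial β (s M) ≤ monomial α0 (s M))
    {lam : (Fin n → ℕ) → ℝ}
    (hlam : ∀ β ∈ D, Tendsto (fun M => monomial β (s M) / monomial α0 (s M)) l (𝓝 (lam β))) :
    Small mm l (fun M u => (monomial α0 (s M))⁻¹ * f (s M * u) -
      ∑ β ∈ D, lam β * c β * monomial β u) := by
  classical
  have hs0 : ∀ᶠ M in l, ∀ j, s M j ≠ 0 := Eventually.of_forall fun M j => (hspos M j).ne'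
  have h1 : Small mm l (fun M u => ∑ β ∈ D,
      (monomial β (s M) / monomial α0 (s M) * h β (s M * u) - lam β * h β 0) * monomial β u) :=
    Small.sum (φ := fun β M u =>
      (monomial β (s M) / monomial α0 (s M) * h β (s M * u) - lam β * h β 0) * monomial β u) D
      fun β hβ => (small_scale' hs hs0 (hh β hβ).1 (hlam β hβ)).mul_fixed (contDiff_monomial β)
  have h2 : Small mm l (fun M u => (monomial α0 (s M))⁻¹ * R (s M * u)) := by
    rcases hR0 with rfl | hax
    · refine (small_const (tendsto_const_nhds (x := (0 : ℝ)))).congr ?_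
      exact Eventually.of_forall fun M u _ => by simp
    · refine small_remainder hs hs0 hR hdecay ?_
      filter_upwards [hmax, hs.eventually (Metric.closedBall_mem_nhds (0 : Fin n → ℝ) zero_lt_one)]
        with M hM hM1
      refine ⟨monomial_pos α0 (hspos M), ?_⟩
      have hle1 : ∀ i, s M i ≤ 1 := fun i =>
        (le_abs_self _).trans ((norm_le_pi_norm (s M) i).trans (mem_closedBall_zero_iff.mp hM1))
      have : Nonempty (Fin n) := ⟨⟨0, hn⟩⟩
      obtain ⟨i, hi⟩ := Finite.exists_max (s M)
      have hnorm : ‖s M‖ ≤ s M i := (pi_norm_le_iff_of_nonneg (hspos M i).le).mpr fun j => by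
        rw [Real.norm_eq_abs, abs_of_pos (hspos M j)]; exact hi j
      obtain ⟨p, hpN, hp⟩ := hax i
      obtain ⟨hbD, hbl⟩ := hb _ hp
      calc ‖s M‖ ^ N ≤ s M i ^ N := by gcongr
        _ ≤ s M i ^ p := pow_le_pow_of_le_one (hspos M i).le (hle1 i) hpN
        _ = monomial (Pi.single i p) (s M) := by
          unfold monomial
          rw [Finset.prod_eq_single i]
          · simp
          · intro j _ hj
            simp [hj]
          · simp
        _ ≤ monomial (b (Pi.single i p)) (s M) := by
          unfold monomial
          refine Finset.prod_le_prod (fun j _ => (pow_pos (hspos M j) _).le) fun j _ => ?_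
          exact pow_le_pow_of_le_one (hspos M j).le (hle1 j) (hbl j)
        _ ≤ _ := hM _ hbD
  refine (h1.add h2).congr ?_
  filter_upwards [eventually_scale hs hf] with M hM u hu
  rw [hM u hu, mul_add, add_sub_right_comm, Finset.mul_sum, ← Finset.sum_sub_distrib]
  congr 1
  refine Finset.sum_congr rfl fun β hβ => ?_
  rw [(hh β hβ).2, monomial_mul]
  ring

/-- **Lemma 2.2 (Lemma 3.7 of [G1]).** If `f` is smooth near `0` with `f(0) = 0`,
`∇f(0) = 0`, nonvanishing Taylor expansion `c`, and `f` is either real-analytic or its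
Newton polyhedron intersects each coordinate axis, then there are a neighborhood `U` of
the origin and constants `K`, `η > 0` such that any dyadic rectangle `R ⊆ U` may be
divided into at most `K` rectangles `R_j`, on each of which there are an integer `a`
and a single `y` with `|y_i| ≤ 2^{-k_i}` such that `|(y·∇)^a f| ≥ η sup_{R_j} f^*` on
`R_j`; moreover for each `j` one can arrange `0 ≤ a ≤ o(f)`, or `2 ≤ a ≤ max(2, o(f))`. -/
theorem lemma_2_2
    (n : ℕ) (hn : 0 < n)
    (f : (Fin n → ℝ) → ℝ) (c : (Fin n → ℕ) → ℝ)
    (U₀ : Set (Fin n → ℝ)) (hU₀ : U₀ ∈ 𝓝 (0 : Fin n → ℝ)) (hsmooth : ContDiffOn ℝ (⊤ : ℕ∞) f U₀)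
    (hf0 : f 0 = 0) (hf1 : fderiv ℝ f 0 = 0)
    (hTaylor : IsTaylorSeriesAt f c) (hc : c ≠ 0)
    (oF : ℕ) (hoF : newtonOrder c = (oF : ℕ∞))
    (hcase : HasTaylorSeriesAtOrigin f c ∨
      ∀ i : Fin n, ∃ x ∈ newtonPolyhedron c, ∀ j, j ≠ i → x j = 0) :
    ∃ U ∈ 𝓝 (0 : Fin n → ℝ), ∃ K : ℕ, ∃ η : ℝ, 0 < η ∧
      ∀ (k : Fin n → ℤ) (σ : Fin n → Bool), dyadicRect k σ ⊆ U →
        ∃ J : ℕ, J ≤ K ∧ ∃ lo hi : Fin J → Fin n → ℝ,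
          (⋃ j, boxOf (lo j) (hi j)) = dyadicRect k σ ∧
          ∀ j : Fin J,
            (∃ aDeg : ℕ, aDeg ≤ oF ∧ ∃ y : Fin n → ℝ,
              (∀ i, |y i| ≤ (2 : ℝ) ^ (-(k i))) ∧
              ∀ x ∈ boxOf (lo j) (hi j),
                η * sSup (starFn c '' boxOf (lo j) (hi j)) ≤
                  |iteratedFDeriv ℝ aDeg f x fun _ => y|) ∧
            (∃ aDeg : ℕ, 2 ≤ aDeg ∧ aDeg ≤ max 2 oF ∧ ∃ y : Fin n → ℝ,
              (∀ i, |y i| ≤ (2 : ℝ) ^ (-(k i))) ∧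
              ∀ x ∈ boxOf (lo j) (hi j),
                η * sSup (starFn c '' boxOf (lo j) (hi j)) ≤
                  |iteratedFDeriv ℝ aDeg f x fun _ => y|) := by
  have hsm : ContDiffAt ℝ (⊤ : ℕ∞) f 0 := hsmooth.contDiffAt hU₀
  obtain ⟨hc0, hc1⟩ := low_coeffs (hsm.differentiableAt (by simp)) hf0 hf1 hTaylor
  obtain ⟨D, b, hD, hb, hbD⟩ := exists_minExp c
  have hDne : D.Nonempty := by
    obtain ⟨α, hα⟩ := Function.ne_iff.mp hc
    exact ⟨b α, (hb α hα).1⟩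
  obtain ⟨h, R, N, hh, hR, hdecay, hf, hR0⟩ :=
    local_structure hsm hTaylor hcase (max 2 oF) D b hb hbD
  suffices hmain : ∃ M : ℕ, ∀ (k : Fin n → ℤ) (σ : Fin n → Bool),
      dyadicRect k σ ⊆ Metric.ball (0 : Fin n → ℝ) ((2 : ℝ) ^ (-(M : ℤ))) →
        Good f c oF M (1 / ((M : ℝ) + 1)) k σ by
    obtain ⟨M, hM⟩ := hmain
    exact ⟨_, Metric.ball_mem_nhds _ (by positivity), M, 1 / ((M : ℝ) + 1), by positivity, hM⟩
  by_contra hcon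
  have hcon' : ∀ M : ℕ, ∃ (k : Fin n → ℤ) (σ : Fin n → Bool),
      dyadicRect k σ ⊆ Metric.ball (0 : Fin n → ℝ) ((2 : ℝ) ^ (-(M : ℤ))) ∧
        ¬ Good f c oF M (1 / ((M : ℝ) + 1)) k σ := by
    intro M
    by_contra hM
    refine hcon ⟨M, fun k σ hkσ => ?_⟩
    by_contra hg
    exact hM ⟨k, σ, hkσ, hg⟩
  choose k σ hsub hnot using hcon'
  have hk : ∀ (M : ℕ) i, (M : ℤ) < k M i := fun M i => k_gt (hsub M) i
  obtain ⟨l, hl⟩ : ∃ l : Ultrafilter ℕ, (l : Filter ℕ) ≤ atTop :=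
    ⟨hyperfilter ℕ, Nat.hyperfilter_le_atTop⟩
  obtain ⟨σ0, hσ0⟩ := (Ultrafilter.eventually_exists_iff (f := l)
    (P := fun s M => σ M = s)).1 (Eventually.of_forall fun M => ⟨σ M, rfl⟩)
  obtain ⟨α0, F0, w, d, k0, hα0, H, hmax, hlim, hlim0⟩ := extract_face l hl k hk c D hDne
  classical
  set lam : (Fin n → ℕ) → ℝ := fun β =>
    if β ∈ F0 then monomial β (sc k0) / monomial α0 (sc k0) else 0 with hlamdef
  set G : (Fin n → ℝ) → ℝ := fun u => ∑ β ∈ D, lam β * c β * monomial β u with hGdef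
  have hpos0 : 0 < monomial α0 (sc k0) := monomial_pos α0 (fun i => sc_pos k0 i)
  have hGeq : ∀ u, G u = (monomial α0 (sc k0))⁻¹ * facePol c F0 (sc k0 * u) := by
    intro u
    simp only [hGdef, facePol, Finset.mul_sum]
    rw [← Finset.sum_subset H.sub]
    · refine Finset.sum_congr rfl fun β hβ => ?_
      rw [monomial_mul]
      simp only [hlamdef, if_pos hβ]
      ring
    · intro β _ hβ
      simp [hlamdef, if_neg hβ]
  have hGs : ContDiff ℝ (⊤ : WithTop ℕ∞) G := by
    have : G = facePol (fun β => lam β * c β) D := rfl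
    rw [this]
    exact contDiff_facePol _ _
  have hne : ∀ x : Fin n → ℝ, (∀ i, x i ≠ 0) → ∀ i, (sc k0 * x) i ≠ 0 := fun x hx i =>
    mul_ne_zero (sc_pos k0 i).ne' (hx i)
  have hA : ∀ x, (∀ i, x i ≠ 0) → ∃ a ≤ oF, iteratedFDeriv ℝ a G x ≠ 0 := by
    intro x hx
    obtain ⟨a, ha, h1⟩ := claimA hD hb H hoF (hne x hx)
    exact ⟨a, ha, rescaled_ne_zero (contDiff_facePol c F0) (inv_ne_zero hpos0.ne') hGeq h1⟩
  have hB : ∀ x, (∀ i, x i ≠ 0) → ∃ a, 2 ≤ a ∧ a ≤ max 2 oF ∧ iteratedFDeriv ℝ a G x ≠ 0 := by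
    intro x hx
    obtain ⟨a, ha, ha', h1⟩ := claimB hD hb H hc0 hc1 hoF (hne x hx)
    exact ⟨a, ha, ha', rescaled_ne_zero (contDiff_facePol c F0) (inv_ne_zero hpos0.ne') hGeq h1⟩
  obtain ⟨J, lo, hi, q, hq, hU, hbox⟩ := subdivision σ0 hGs hA hB
  have hs : Tendsto (fun M => sc (k M)) (l : Filter ℕ) (𝓝 0) := by
    rw [tendsto_pi_nhds]
    intro i
    refine Tendsto.mono_left ?_ hl
    have hgeo : Tendsto (fun M : ℕ => (1 / 2 : ℝ) ^ M) atTop (𝓝 0) :=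
      tendsto_pow_atTop_nhds_zero_of_lt_one (by norm_num) (by norm_num)
    refine squeeze_zero (fun M => (sc_pos (k M) i).le) (fun M => ?_) hgeo
    have : (1 / 2 : ℝ) ^ M = (2 : ℝ) ^ (-(M : ℤ)) := by
      rw [zpow_neg, zpow_natCast, one_div, inv_pow]
    rw [this]
    exact zpow_le_zpow_right₀ (by norm_num) (neg_le_neg (hk M i).le)
  have hlam : ∀ β ∈ D, Tendsto (fun M => monomial β (sc (k M)) / monomial α0 (sc (k M)))
      (l : Filter ℕ) (𝓝 (lam β)) := by
    intro β hβ
    by_cases hF : β ∈ F0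
    · simp only [hlamdef, if_pos hF]
      exact hlim β hF
    · simp only [hlamdef, if_neg hF]
      exact hlim0 β hβ hF
  obtain ⟨hS1, hS2⟩ := small_difference hb hh hR hdecay hf hR0 hn hs
    (fun M i => sc_pos (k M) i) hmax hlam
  have hS3 : ∀ᶠ M in (l : Filter ℕ), ∀ a ∈ Finset.range (max 2 oF + 1),
      ∀ u ∈ Metric.ball (0 : Fin n → ℝ) 2,
      ‖iteratedFDeriv ℝ a (fun u => (monomial α0 (sc (k M)))⁻¹ * f (sc (k M) * u) -
        ∑ β ∈ D, lam β * c β * monomial β u) u‖ ≤ q / 2 := by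
    rw [Filter.eventually_all_finset]
    intro a ha
    exact hS2 a (Nat.lt_succ_iff.mp (Finset.mem_range.mp ha)) (q / 2) (by positivity)
  have hcard : (0 : ℝ) < D.card := by exact_mod_cast hDne.card_pos
  have hη : ∀ᶠ M : ℕ in (l : Filter ℕ), 1 / ((M : ℝ) + 1) < q / 2 / D.card :=
    hl (tendsto_one_div_add_atTop_nhds_zero_nat.eventually_lt_const (by positivity))
  have hJ : ∀ᶠ M : ℕ in (l : Filter ℕ), J ≤ M := hl (eventually_ge_atTop J)
  obtain ⟨M, e1, e2, e3, e4, e5, e6⟩ :=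
    (hσ0.and (hmax.and (hS1.and (hS3.and (hη.and hJ))))).exists
  have hμ : 0 < monomial α0 (sc (k M)) := monomial_pos α0 (fun i => sc_pos (k M) i)
  have hgood : Good f c oF J (q / 2 / D.card) (k M) σ0 :=
    transfer hGs hq hU hbox hμ hcard
      (fun u hu => starFn_le hD hb (fun i => sc_pos (k M) i) hu hμ.le e2)
      e3 (fun a ha => e4 a (Finset.mem_range.mpr (Nat.lt_succ_of_le ha)))
  refine hnot M ?_
  rw [e1]
  exact hgood.mono e6 e5.le

end Paper
end
end

section
/- Let $S$, $K$, and the data $\alpha_k,l_k$ be as in the standing assumptions, with $g=\min(a_0, l_1-\alpha_1,\dots,l_m-\alpha_m)$, and for $z\in\mathbf{C}$ let $T_z$ denote the analytic family with kernel factor $(\min(|t_1|,\dots,|t_n|,S^*(\mathbf{t})))^z$. Suppose $0>s_0>\max(-g,\,-1/\max(o(S),2))$. Then for every $z$ on the line $\mathrm{Re}(z)=s_0$ and every $2<p<\infty$, there exists a constant $C_{s_0}$ (independent of $z$ and $p$) such that $\|T_z f\|_{L^p(\mathbf{R}^{n+1})}\le C_{s_0}\|f\|_{L^p(\mathbf{R}^{n+1})}$.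 -/
open MeasureTheory Real Filter Topology Set
open scoped ENNReal

noncomputable section

namespace Paper

variable {n m : ℕ}

lemma verts_countable (c : (Fin n → ℕ) → ℝ) : (newtonVertices c).Countable := by
  apply (Set.countable_range (fun (α : Fin n → ℕ) => (fun i => (α i : ℝ)))).mono
  intro x hx
  have hA := extremePoints_convexHull_subset hx
  obtain ⟨α, hα, h⟩ := hA
  refine ⟨α, ?_⟩
  have h1 : (fun i => (α i : ℝ)) ∈ newtonPolyhedron c :=
    subset_convexHull ℝ _ ⟨α, hα, fun i => le_rfl⟩
  have h2 : (fun i => 2 * x i - (α i : ℝ)) ∈ newtonPolyhedron c :=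
    subset_convexHull ℝ _ ⟨α, hα, fun i => by linarith [h i]⟩
  have := hx.2 h1 h2 ⟨1/2, 1/2, by norm_num, by norm_num, by norm_num, by
    ext i; simp; ring⟩
  exact this

lemma starFn_measurable (c : (Fin n → ℕ) → ℝ) : Measurable (starFn c) := by
  have : Countable (newtonVertices c) := (verts_countable c).to_subtype
  have h : starFn c = fun t => (∑' v : newtonVertices c,
      ENNReal.ofReal (∏ i, |t i| ^ ((v : Fin n → ℝ) i))).toReal := by
    ext t
    rw [ENNReal.tsum_toReal_eq (fun _ => ENNReal.ofReal_ne_top)]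
    unfold starFn
    congr 1; ext v
    rw [ENNReal.toReal_ofReal]
    exact Finset.prod_nonneg fun i _ => Real.rpow_nonneg (abs_nonneg _) _
  rw [h]
  refine Measurable.ennreal_toReal (Measurable.tsum fun v => ?_)
  refine ENNReal.measurable_ofReal.comp ?_
  refine Finset.measurable_prod _ fun i _ => ?_
  exact Measurable.pow_const (Continuous.measurable (by fun_prop)) _

lemma kernelWeight_nonneg (grp : Fin n → Fin m) (a : Fin m → ℝ) (t : Fin n → ℝ) :
    0 ≤ kernelWeight grp a t :=
  Finset.prod_nonneg fun _ _ => Real.rpow_nonneg (Real.sqrt_nonneg _) _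

lemma kernelWeight_measurable (grp : Fin n → Fin m) (a : Fin m → ℝ) :
    Measurable (kernelWeight grp a) := by
  unfold kernelWeight grpNorm
  refine Finset.measurable_prod _ fun k _ => Measurable.pow_const ?_ _
  apply Continuous.measurable
  fun_prop

lemma kernelWeight_le (grp : Fin n → Fin m) (a : Fin m → ℝ) (b : Fin n → ℝ)
    (hb : ∀ j, 0 ≤ b j) (hab : ∀ k, ∑ j ∈ Finset.univ.filter (fun i => grp i = k), b j = a k)
    (hgrp : Function.Surjective grp)
    (t : Fin n → ℝ) (ht : ∀ i, 0 < t i) :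
    kernelWeight grp a t ≤ ∏ j, t j ^ (-b j) := by
  rw [← Finset.prod_fiberwise Finset.univ grp]
  unfold kernelWeight
  refine Finset.prod_le_prod (fun k _ => Real.rpow_nonneg (Real.sqrt_nonneg _) _) fun k _ => ?_
  have hle : ∀ j, grp j = k → t j ≤ grpNorm grp k t := by
    intro j hj
    unfold grpNorm
    apply Real.le_sqrt_of_sq_le
    exact Finset.single_le_sum (f := fun i => t i ^ 2) (fun i _ => sq_nonneg _) (by simp [hj])
  obtain ⟨j0, hj0⟩ := hgrp k
  have hpos : 0 < grpNorm grp k t := (ht j0).trans_le (hle j0 hj0)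
  rw [← hab k, ← Finset.sum_neg_distrib, Real.rpow_sum_of_pos hpos]
  refine Finset.prod_le_prod (fun j _ => Real.rpow_nonneg hpos.le _) fun j hj => ?_
  exact Real.rpow_le_rpow_of_nonpos (ht j) (hle j (by simpa using hj)) (by linarith [hb j])

/-- The positive cube. -/
def posCube (n : ℕ) (r : ℝ) : Set (Fin n → ℝ) := {t | ∀ i, t i ∈ Set.Ioo 0 r}

lemma posCube_eq (r : ℝ) : posCube n r = Set.univ.pi fun _ => Set.Ioo 0 r := by
  ext t; simp [posCube]

lemma posCube_meas (r : ℝ) : MeasurableSet (posCube n r) := by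
  rw [posCube_eq]; exact MeasurableSet.univ_pi fun _ => measurableSet_Ioo

lemma prod_rpow_lintegral (e : Fin n → ℝ) (he : ∀ j, e j < 1) (r : ℝ) (hr : 0 < r) :
    ∫⁻ t in posCube n r, ENNReal.ofReal (∏ j, t j ^ (-e j)) < ∞ := by
  have h1 : ∀ j, Integrable (fun x : ℝ => x ^ (-e j)) (volume.restrict (Set.Ioo 0 r)) := by
    intro j
    exact (intervalIntegral.integrableOn_Ioo_rpow_iff hr).2 (by linarith [he j])
  have h2 := Integrable.fintype_prod h1
  rw [posCube_eq, volume_pi, Measure.restrict_pi_pi]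
  exact h2.lintegral_lt_top

lemma weight_lintegral (grp : Fin n → Fin m) (a : Fin m → ℝ) (hgrp : Function.Surjective grp)
    (l : Fin m → ℕ) (hl : ∀ k, l k = (Finset.univ.filter (fun i => grp i = k)).card)
    (ha : ∀ k, 0 ≤ a k) (u : Fin n → ℝ) (hu1 : ∀ j, u j < 1)
    (hau : ∀ k, a k + ∑ j ∈ Finset.univ.filter (fun i => grp i = k), u j < l k)
    (r : ℝ) (hr : 0 < r) :
    ∫⁻ t in posCube n r, ENNReal.ofReal ((∏ j, t j ^ (-u j)) * kernelWeight grp a t) < ∞ := by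
  set U : Fin m → ℝ := fun k => ∑ j ∈ Finset.univ.filter (fun i => grp i = k), u j with hU
  set θ : Fin m → ℝ := fun k => a k / (l k - U k) with hθ
  have hd : ∀ k, 0 < (l k : ℝ) - U k := fun k => by have := hau k; have := ha k; simp only [hU]; linarith
  have hθ0 : ∀ k, 0 ≤ θ k := fun k => div_nonneg (ha k) (hd k).le
  have hθ1 : ∀ k, θ k < 1 := fun k => by
    rw [hθ]; simp only; rw [div_lt_one (hd k)]; have := hau k; simp only [hU]; linarith
  set b : Fin n → ℝ := fun j => θ (grp j) * (1 - u j) with hb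
  have hb0 : ∀ j, 0 ≤ b j := fun j => mul_nonneg (hθ0 _) (by linarith [hu1 j])
  have hab : ∀ k, ∑ j ∈ Finset.univ.filter (fun i => grp i = k), b j = a k := by
    intro k
    have : ∑ j ∈ Finset.univ.filter (fun i => grp i = k), b j
        = ∑ j ∈ Finset.univ.filter (fun i => grp i = k), θ k * (1 - u j) := by
      refine Finset.sum_congr rfl fun j hj => ?_
      have : grp j = k := by simpa using hj
      simp only [hb, this]
    rw [this, ← Finset.mul_sum, Finset.sum_sub_distrib]
    simp only [Finset.sum_const, nsmul_eq_mul, mul_one, ← hl]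
    exact div_mul_cancel₀ _ (hd k).ne'
  refine lt_of_le_of_lt (setLIntegral_mono' (posCube_meas r) fun t ht => ?_)
    (prod_rpow_lintegral (fun j => u j + b j) (fun j => ?_) r hr)
  · have ht0 : ∀ i, 0 < t i := fun i => (ht i).1
    apply ENNReal.ofReal_le_ofReal
    have : ∏ j, t j ^ (-(u j + b j)) = (∏ j, t j ^ (-u j)) * ∏ j, t j ^ (-b j) := by
      rw [← Finset.prod_mul_distrib]
      refine Finset.prod_congr rfl fun j _ => ?_
      rw [← Real.rpow_add (ht0 j)]; congr 1; ring
    rw [this]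
    exact mul_le_mul_of_nonneg_left (kernelWeight_le grp a b hb0 hab hgrp t ht0)
      (Finset.prod_nonneg fun i _ => Real.rpow_nonneg (ht0 i).le _)
  · simp only [hb]
    nlinarith [hθ1 (grp j), hu1 j, hθ0 (grp j)]

lemma star_lintegral (μ : Measure (Fin n → ℝ)) (Q : Set (Fin n → ℝ)) (hQ : μ Q < ∞)
    (φ : (Fin n → ℝ) → ℝ) (hφ0 : ∀ t, 0 ≤ φ t)
    (a₀ s B : ℝ) (d : ℕ) (hs : s < 0) (has : 0 < a₀ + s)
    (H : ∀ ε : ℝ, 0 < ε → ε < 1/2 →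
      μ {t | t ∈ Q ∧ φ t < ε} ≤ ENNReal.ofReal (B * ε ^ a₀ * |Real.log ε| ^ d))
    (hφm : Measurable φ) (hQm : MeasurableSet Q) :
    ∫⁻ t in Q, ENNReal.ofReal (φ t ^ s) ∂μ < ∞ := by
  set q : ℝ := 1/2 with hq
  have hq0 : 0 < q := by norm_num [hq]
  -- pointwise bound
  set A : ℕ → Set (Fin n → ℝ) := fun j => {t | t ∈ Q ∧ φ t < q ^ (j+2)} with hA
  have hAm : ∀ j, MeasurableSet (A j) := fun j => hQm.inter (hφm measurableSet_Iio)
  have hpt : ∀ t ∈ Q, ENNReal.ofReal (φ t ^ s) ≤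
      ENNReal.ofReal ((q^2) ^ s) + ∑' j : ℕ, (A j).indicator
        (fun _ => ENNReal.ofReal ((q ^ (j+3)) ^ s)) t := by
    intro t ht
    rcases (hφ0 t).eq_or_lt with h0 | h0
    · rw [← h0, Real.zero_rpow hs.ne]; simp
    by_cases h2 : q^2 ≤ φ t
    · refine le_add_right (ENNReal.ofReal_le_ofReal ?_)
      exact Real.rpow_le_rpow_of_nonpos (by positivity) h2 hs.le
    · push Not at h2
      refine le_add_left ?_
      obtain ⟨k, hk1, hk2⟩ := exists_nat_pow_near_of_lt_one h0 (by
        have : q^2 ≤ 1 := by norm_num [hq]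
        linarith) hq0 (by norm_num [hq] : q < 1)
      have hk : 2 ≤ k := by
        by_contra hk
        have : q ^ 2 ≤ q ^ (k+1) := pow_le_pow_of_le_one hq0.le (by norm_num [hq]) (by omega)
        linarith
      -- strictness: shift
      by_cases he : φ t = q ^ k
      · have hk3 : 3 ≤ k := by
          by_contra hk'
          have : k = 2 := by omega
          rw [this] at he; linarith
        refine le_trans ?_ (ENNReal.le_tsum (k-3))
        rw [Set.indicator_of_mem]
        · rw [he]; rw [show k - 3 + 3 = k by omega]
        · refine ⟨ht, ?_⟩
          rw [he]
          exact pow_lt_pow_right_of_lt_one₀ hq0 (by norm_num [hq]) (by omega)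
      · refine le_trans ?_ (ENNReal.le_tsum (k-2))
        rw [Set.indicator_of_mem]
        · apply ENNReal.ofReal_le_ofReal
          rw [show k - 2 + 3 = k + 1 by omega]
          exact Real.rpow_le_rpow_of_nonpos (by positivity) hk1.le hs.le
        · refine ⟨ht, ?_⟩
          rw [show k - 2 + 2 = k by omega]
          exact lt_of_le_of_ne hk2 he
  refine lt_of_le_of_lt (setLIntegral_mono' hQm hpt) ?_
  rw [lintegral_add_left measurable_const, lintegral_tsum (fun j =>
    (measurable_const.indicator (hAm j)).aemeasurable)]
  simp only [lintegral_const, Measure.restrict_apply_univ]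
  refine ENNReal.add_lt_top.2 ⟨ENNReal.mul_lt_top ENNReal.ofReal_lt_top hQ, ?_⟩
  set ρ : ℝ := q ^ (a₀ + s) with hρ
  have hρ0 : 0 < ρ := by positivity
  have hρ1 : ρ < 1 := Real.rpow_lt_one hq0.le (by norm_num [hq]) has
  have hsum : Summable (fun j : ℕ => ((j+2 : ℕ) : ℝ) ^ d * ρ ^ (j+2)) :=
    (summable_nat_add_iff 2).2 (summable_pow_mul_geometric_of_norm_lt_one (R := ℝ) d
      (by rw [Real.norm_of_nonneg hρ0.le]; exact hρ1))
  have hsum2 := hsum.mul_left (|B| * |Real.log q| ^ d * q ^ s)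
  refine lt_of_le_of_lt (ENNReal.tsum_le_tsum (g := fun j : ℕ => ENNReal.ofReal
    ((|B| * |Real.log q| ^ d * q ^ s) * (((j+2 : ℕ) : ℝ) ^ d * ρ ^ (j+2)))) fun j => ?_)
    hsum2.tsum_ofReal_lt_top
  rw [lintegral_indicator (hAm j), lintegral_const, Measure.restrict_apply_univ,
    Measure.restrict_apply' hQm]
  have hε : q ^ (j+2) < 1/2 := by
    calc q ^ (j+2) ≤ q^2 := pow_le_pow_of_le_one hq0.le (by norm_num [hq]) (by omega)
      _ < 1/2 := by norm_num [hq]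
  have h1 : μ (A j ∩ Q) ≤ ENNReal.ofReal (B * (q ^ (j+2)) ^ a₀ * |Real.log (q ^ (j+2))| ^ d) :=
    (measure_mono inter_subset_left).trans (H _ (by positivity) hε)
  refine (mul_le_mul_right h1 _).trans ?_
  rw [← ENNReal.ofReal_mul (by positivity)]
  apply ENNReal.ofReal_le_ofReal
  have e1 : (q ^ (j+3)) ^ s = q ^ s * (q ^ s) ^ (j+2) := by
    rw [← Real.rpow_natCast, ← Real.rpow_natCast, ← Real.rpow_mul hq0.le, ← Real.rpow_mul hq0.le,
      ← Real.rpow_add hq0]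
    congr 1; push_cast; ring
  have e2 : (q ^ (j+2)) ^ a₀ = (q ^ a₀) ^ (j+2) := by
    rw [← Real.rpow_natCast, ← Real.rpow_natCast, ← Real.rpow_mul hq0.le, ← Real.rpow_mul hq0.le,
      mul_comm]
  have e3 : ρ ^ (j+2) = (q ^ a₀) ^ (j+2) * (q ^ s) ^ (j+2) := by
    rw [hρ, Real.rpow_add hq0, mul_pow]
  rw [e1, e2, e3, Real.log_pow, abs_mul, mul_pow, Nat.abs_cast]
  have : B ≤ |B| := le_abs_self B
  have hP : 0 ≤ q ^ s * (q ^ s) ^ (j+2) * ((q ^ a₀) ^ (j+2) * (((j+2 : ℕ) : ℝ) ^ d * |Real.log q| ^ d)) := by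
    positivity
  calc _ = B * (q ^ s * (q ^ s) ^ (j+2) * ((q ^ a₀) ^ (j+2) * (((j+2 : ℕ) : ℝ) ^ d * |Real.log q| ^ d))) := by ring
    _ ≤ |B| * (q ^ s * (q ^ s) ^ (j+2) * ((q ^ a₀) ^ (j+2) * (((j+2 : ℕ) : ℝ) ^ d * |Real.log q| ^ d))) :=
      mul_le_mul_of_nonneg_right this hP
    _ = _ := by ring

lemma octant_lintegral (F : (Fin n → ℝ) → ℝ≥0∞)
    (hF : ∀ t, F (fun i => |t i|) = F t) (r : ℝ)
    (hfin : ∫⁻ t in posCube n r, F t < ∞) :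
    ∫⁻ t in {t : Fin n → ℝ | (∀ i, t i ≠ 0) ∧ ∀ i, |t i| < r}, F t < ∞ := by
  set σ : (Fin n → Bool) → (Fin n → ℝ) → (Fin n → ℝ) :=
    fun β t i => if β i then t i else - t i with hσ
  have hmp : ∀ β, MeasurePreserving (σ β) := by
    intro β
    refine volume_preserving_pi (f := fun i (x : ℝ) => if β i then x else -x) fun i => ?_
    cases β i
    · simpa using Measure.measurePreserving_neg (volume : Measure ℝ)
    · simp only [if_true]; exact MeasurePreserving.id (volume : Measure ℝ)
  have hinv : ∀ β t, σ β (σ β t) = t := by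
    intro β t; ext i; simp only [hσ]; split_ifs <;> simp
  have hemb : ∀ β, MeasurableEmbedding (σ β) := fun β =>
    (MeasurableEquiv.mk ⟨σ β, σ β, hinv β, hinv β⟩ (hmp β).measurable
      (hmp β).measurable).measurableEmbedding
  have hsub : {t : Fin n → ℝ | (∀ i, t i ≠ 0) ∧ ∀ i, |t i| < r} ⊆
      ⋃ β, σ β ⁻¹' posCube n r := by
    rintro t ⟨h0, h1⟩
    simp only [Set.mem_iUnion]
    refine ⟨fun i => decide (0 < t i), fun i => ?_⟩
    simp only [hσ, decide_eq_true_eq]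
    have := h1 i
    split_ifs with h
    · rw [abs_of_pos h] at this; exact ⟨h, this⟩
    · have hn : t i < 0 := lt_of_le_of_ne (not_lt.1 h) (h0 i)
      rw [abs_of_neg hn] at this
      exact ⟨by linarith, this⟩
  have hFσ : ∀ β t, F (σ β t) = F t := by
    intro β t
    rw [← hF, ← hF t]; congr 1; ext i; simp only [hσ]; split_ifs <;> simp
  refine lt_of_le_of_lt (lintegral_mono_set hsub) ?_
  refine lt_of_le_of_lt (lintegral_iUnion_le _ _) ?_
  rw [tsum_fintype]
  refine ENNReal.sum_lt_top.2 fun β _ => ?_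
  have := (hmp β).setLIntegral_comp_preimage_emb (hemb β) F (posCube n r)
  simp only [hFσ] at this
  rw [this]; exact hfin

lemma minkowski_bound {N : ℕ} (ν : Measure (Fin n → ℝ)) [IsFiniteMeasure ν]
    (Γ : (Fin n → ℝ) → (Fin N → ℝ)) (hΓ : Measurable Γ)
    (f : (Fin N → ℝ) → ℂ) (hf : Continuous f) (p : ℝ) (hp : 2 < p) (D : ℝ≥0∞)
    (h : (Fin N → ℝ) → ℂ) (hh : ∀ x, ‖h x‖ₑ ≤ D * ∫⁻ t, ‖f (x - Γ t)‖ₑ ∂ν) :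
    eLpNorm h (ENNReal.ofReal p) volume ≤
      D * ν univ * eLpNorm f (ENNReal.ofReal p) volume := by
  have hp0 : 0 < p := by linarith
  have hpE : ENNReal.ofReal p ≠ 0 := by simpa using hp0
  have hpt : (ENNReal.ofReal p).toReal = p := ENNReal.toReal_ofReal hp0.le
  have hmeas : ∀ x, AEStronglyMeasurable (fun t => f (x - Γ t)) ν := fun x =>
    (hf.measurable.comp (measurable_const.sub hΓ)).aestronglyMeasurable
  have key : ∀ x, ‖h x‖ₑ ^ p ≤
      (D ^ p * ν univ ^ (p - 1)) * ∫⁻ t, ‖f (x - Γ t)‖ₑ ^ p ∂ν := by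
    intro x
    have h1 := eLpNorm_le_eLpNorm_mul_rpow_measure_univ (p := 1) (q := ENNReal.ofReal p)
      (by rw [← ENNReal.ofReal_one]; exact ENNReal.ofReal_le_ofReal (by linarith)) (hmeas x)
    rw [eLpNorm_one_eq_lintegral_enorm,
      eLpNorm_eq_lintegral_rpow_enorm_toReal hpE ENNReal.ofReal_ne_top, hpt] at h1
    have h2 := ENNReal.rpow_le_rpow ((hh x).trans (mul_le_mul_right h1 D)) hp0.le
    refine h2.trans (le_of_eq ?_)
    rw [ENNReal.mul_rpow_of_nonneg _ _ hp0.le, ENNReal.mul_rpow_of_nonneg _ _ hp0.le,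
      ← ENNReal.rpow_mul, ← ENNReal.rpow_mul, one_div_mul_cancel hp0.ne', ENNReal.rpow_one]
    have : (1 / (1 : ℝ≥0∞).toReal - 1 / p) * p = p - 1 := by
      simp; field_simp
    rw [this]; ring
  rw [eLpNorm_eq_lintegral_rpow_enorm_toReal hpE ENNReal.ofReal_ne_top,
    eLpNorm_eq_lintegral_rpow_enorm_toReal hpE ENNReal.ofReal_ne_top, hpt]
  have hjm : Measurable (fun q : (Fin N → ℝ) × (Fin n → ℝ) => ‖f (q.1 - Γ q.2)‖ₑ ^ p) :=
    ((hf.measurable.comp (measurable_fst.sub (hΓ.comp measurable_snd))).enorm).pow_const _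
  have h3 : ∫⁻ x, ‖h x‖ₑ ^ p ≤ (D ^ p * ν univ ^ p) * ∫⁻ x, ‖f x‖ₑ ^ p := by
    calc ∫⁻ x, ‖h x‖ₑ ^ p ≤ ∫⁻ x, (D ^ p * ν univ ^ (p - 1)) * ∫⁻ t, ‖f (x - Γ t)‖ₑ ^ p ∂ν :=
          lintegral_mono key
      _ = (D ^ p * ν univ ^ (p - 1)) * ∫⁻ x, ∫⁻ t, ‖f (x - Γ t)‖ₑ ^ p ∂ν :=
          lintegral_const_mul _ hjm.lintegral_prod_right'
      _ = (D ^ p * ν univ ^ (p - 1)) * ∫⁻ t, ∫⁻ x, ‖f (x - Γ t)‖ₑ ^ p ∂volume ∂ν := by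
          rw [lintegral_lintegral_swap hjm.aemeasurable]
      _ = (D ^ p * ν univ ^ (p - 1)) * ((∫⁻ x, ‖f x‖ₑ ^ p) * ν univ) := by
          congr 1
          rw [← lintegral_const]
          refine lintegral_congr fun t => ?_
          exact lintegral_sub_right_eq_self (fun x => ‖f x‖ₑ ^ p) (Γ t)
      _ = (D ^ p * (ν univ ^ (p - 1) * ν univ ^ (1:ℝ))) * ∫⁻ x, ‖f x‖ₑ ^ p := by
          rw [ENNReal.rpow_one]; ring
      _ = _ := by
          rw [← ENNReal.rpow_add_of_nonneg _ _ (by linarith) zero_le_one]; simp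
  refine (ENNReal.rpow_le_rpow h3 (by positivity : 0 ≤ 1 / p)).trans (le_of_eq ?_)
  rw [ENNReal.mul_rpow_of_nonneg _ _ (by positivity), ENNReal.mul_rpow_of_nonneg _ _ (by positivity),
    ← ENNReal.rpow_mul, ← ENNReal.rpow_mul, mul_one_div_cancel hp0.ne', ENNReal.rpow_one,
    ENNReal.rpow_one]

lemma minFactor_rpow_le (hn : 0 < n) (c : (Fin n → ℕ) → ℝ) (s : ℝ) (t : Fin n → ℝ) :
    minFactor c t ^ s ≤ (∑ i, |t i| ^ s) + starFn c t ^ s := by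
  have : Nonempty (Fin n) := ⟨⟨0, hn⟩⟩
  have hs : 0 ≤ starFn c t ^ s := Real.rpow_nonneg (starFn_nonneg c t) _
  have hi : ∀ i ∈ Finset.univ, 0 ≤ |t i| ^ s := fun i _ => Real.rpow_nonneg (abs_nonneg _) _
  unfold minFactor
  obtain ⟨i, h⟩ := exists_eq_ciInf_of_finite (f := fun i => |t i|)
  rcases min_choice (⨅ i, |t i|) (starFn c t) with h' | h'
  · rw [h', ← h]
    exact (Finset.single_le_sum hi (Finset.mem_univ i)).trans (by linarith)
  · rw [h']
    linarith [Finset.sum_nonneg hi]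

lemma minFactor_nonneg (c : (Fin n → ℕ) → ℝ) (t : Fin n → ℝ) : 0 ≤ minFactor c t :=
  le_min (Real.iInf_nonneg fun _ => abs_nonneg _) (starFn_nonneg c t)

lemma norm_minFactor_cpow_le (hn : 0 < n) (c : (Fin n → ℕ) → ℝ) (z : ℂ) (hz : z.re < 0)
    (t : Fin n → ℝ) :
    ‖(minFactor c t : ℂ) ^ z‖ ≤ (∑ i, |t i| ^ z.re) + starFn c t ^ z.re := by
  refine le_trans ?_ (minFactor_rpow_le hn c z.re t)
  rcases (minFactor_nonneg c t).eq_or_lt with h | h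
  · rw [← h]
    have : z ≠ 0 := by rintro rfl; simp at hz
    rw [Complex.ofReal_zero, Complex.zero_cpow this, Real.zero_rpow hz.ne]; simp
  · rw [Complex.norm_cpow_eq_rpow_re_of_pos h]

/-- The majorant of the kernel. -/
def majorant (grp : Fin n → Fin m) (a : Fin m → ℝ) (c : (Fin n → ℕ) → ℝ) (s : ℝ)
    (t : Fin n → ℝ) : ℝ :=
  ((∑ i, |t i| ^ s) + starFn c t ^ s) * kernelWeight grp a t

lemma majorant_measurable (grp : Fin n → Fin m) (a : Fin m → ℝ) (c : (Fin n → ℕ) → ℝ) (s : ℝ) :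
    Measurable (majorant grp a c s) := by
  refine Measurable.mul (Measurable.add ?_ ((starFn_measurable c).pow_const _))
    (kernelWeight_measurable grp a)
  exact Finset.measurable_sum _ fun i _ => Measurable.pow_const (Continuous.measurable (by fun_prop)) _

lemma majorant_abs (grp : Fin n → Fin m) (a : Fin m → ℝ) (c : (Fin n → ℕ) → ℝ) (s : ℝ)
    (t : Fin n → ℝ) : majorant grp a c s (fun i => |t i|) = majorant grp a c s t := by
  simp [majorant, starFn, kernelWeight, grpNorm]

lemma majorant_lintegral (hn : 0 < n)
    (grp : Fin n → Fin m) (hgrp : Function.Surjective grp)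
    (l : Fin m → ℕ) (hl : ∀ k, l k = (Finset.univ.filter (fun i => grp i = k)).card)
    (a : Fin m → ℝ) (ha : ∀ k, 0 ≤ a k ∧ a k < l k)
    (c : (Fin n → ℕ) → ℝ) (a₀ : ℝ) (d₀ : ℕ)
    (s : ℝ) (hs : s < 0) (hs1 : -1 < s) (hsl : ∀ k, a k - s < l k) (hsa : 0 < a₀ + s)
    (r : ℝ) (hr : 0 < r) (B : ℝ)
    (H : ∀ ε : ℝ, 0 < ε → ε < 1/2 → fracMeasure grp a
        {t | (∀ i, t i ∈ Set.Ioo 0 r) ∧ starFn c t < ε} <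
          ENNReal.ofReal (B * ε ^ a₀ * |Real.log ε| ^ d₀)) :
    ∫⁻ t in {t : Fin n → ℝ | (∀ i, t i ≠ 0) ∧ ∀ i, |t i| < r},
      ENNReal.ofReal (majorant grp a c s t) < ∞ := by
  apply octant_lintegral (fun t => ENNReal.ofReal (majorant grp a c s t))
    (fun t => by rw [majorant_abs])
  have hi : ∀ i, ∫⁻ t in posCube n r,
      ENNReal.ofReal (|t i| ^ s * kernelWeight grp a t) < ∞ := by
    intro i
    refine lt_of_le_of_lt (setLIntegral_mono' (posCube_meas r) fun t ht => ?_)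
      (weight_lintegral grp a hgrp l hl (fun k => (ha k).1) (Pi.single i (-s)) ?_ ?_ r hr)
    · apply ENNReal.ofReal_le_ofReal
      refine mul_le_mul_of_nonneg_right (le_of_eq ?_) (kernelWeight_nonneg _ _ _)
      rw [Finset.prod_eq_single i]
      · simp [abs_of_pos (ht i).1]
      · intro j _ hj; simp [Pi.single_eq_of_ne hj]
      · simp
    · intro j
      by_cases h : j = i
      · subst h; simp; linarith
      · rw [Pi.single_eq_of_ne h]; norm_num
    · intro k
      have h1 : ∑ j ∈ Finset.univ.filter (fun i => grp i = k), (Pi.single i (-s) : Fin n → ℝ) j ≤ -s := by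
        calc _ ≤ ∑ j, (Pi.single i (-s) : Fin n → ℝ) j := by
              refine Finset.sum_le_sum_of_subset_of_nonneg (Finset.subset_univ _) fun j _ _ => ?_
              by_cases h : j = i
              · subst h; simp; linarith
              · rw [Pi.single_eq_of_ne h]
          _ = -s := by simp
      linarith [hsl k]
  have hμ : fracMeasure grp a (posCube n r) < ∞ := by
    unfold fracMeasure
    rw [withDensity_apply _ (posCube_meas r)]
    have := weight_lintegral grp a hgrp l hl (fun k => (ha k).1) (fun _ => 0)
      (fun _ => zero_lt_one) (by simpa using fun k => (ha k).2) r hr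
    simpa using this
  have hst : ∫⁻ t in posCube n r, ENNReal.ofReal (starFn c t ^ s * kernelWeight grp a t) < ∞ := by
    have h1 := star_lintegral (fracMeasure grp a) (posCube n r) hμ (starFn c) (starFn_nonneg c)
      a₀ s B d₀ hs hsa (fun ε h0 h1 => (H ε h0 h1).le) (starFn_measurable c) (posCube_meas r)
    unfold fracMeasure at h1
    rw [restrict_withDensity (posCube_meas r), lintegral_withDensity_eq_lintegral_mul _
      (kernelWeight_measurable grp a).ennreal_ofReal
      ((starFn_measurable c).pow_const s).ennreal_ofReal] at h1
    refine lt_of_le_of_lt (lintegral_mono fun t => ?_) h1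
    rw [Pi.mul_apply, mul_comm (starFn c t ^ s), ENNReal.ofReal_mul (kernelWeight_nonneg _ _ _)]
  have hsplit : ∀ t, ENNReal.ofReal (majorant grp a c s t) =
      (∑ i, ENNReal.ofReal (|t i| ^ s * kernelWeight grp a t)) +
        ENNReal.ofReal (starFn c t ^ s * kernelWeight grp a t) := by
    intro t
    have hk := kernelWeight_nonneg grp a t
    have hp : ∀ i, 0 ≤ |t i| ^ s * kernelWeight grp a t := fun i =>
      mul_nonneg (Real.rpow_nonneg (abs_nonneg _) _) hk
    rw [← ENNReal.ofReal_sum_of_nonneg (fun i _ => hp i), ← ENNReal.ofReal_add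
      (Finset.sum_nonneg fun i _ => hp i)
      (mul_nonneg (Real.rpow_nonneg (starFn_nonneg c t) _) hk), majorant, add_mul, Finset.sum_mul]
  simp only [hsplit]
  have hm1 : ∀ i, Measurable fun t : Fin n → ℝ => ENNReal.ofReal (|t i| ^ s * kernelWeight grp a t) :=
    fun i => ENNReal.measurable_ofReal.comp
      ((Measurable.pow_const (Continuous.measurable (by fun_prop)) _).mul (kernelWeight_measurable grp a))
  rw [lintegral_add_left (Finset.measurable_sum _ fun i _ => hm1 i),
    lintegral_finset_sum _ fun i _ => hm1 i]
  exact ENNReal.add_lt_top.2 ⟨ENNReal.sum_lt_top.2 fun i _ => hi i, hst⟩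

lemma monomial_measurable (α : Fin n → ℕ) : Measurable (monomial α) := by
  unfold monomial
  exact Continuous.measurable (by fun_prop)

lemma indicator_measurable (S : (Fin n → ℝ) → ℝ) (c : (Fin n → ℕ) → ℝ) (V : Set (Fin n → ℝ))
    (hV : MeasurableSet V) (h : ∀ t ∈ V, HasSum (fun α => c α * monomial α t) (S t)) :
    Measurable (V.indicator S) := by
  refine measurable_of_tendsto_metrizable' (u := (atTop : Filter (Finset (Fin n → ℕ))))
    (f := fun s => V.indicator (fun t => ∑ α ∈ s, c α * monomial α t)) (fun s => ?_) ?_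
  · exact Measurable.indicator (Finset.measurable_sum _ fun α _ =>
      (monomial_measurable α).const_mul _) hV
  · rw [tendsto_pi_nhds]
    intro t
    by_cases ht : t ∈ V
    · simp only [Set.indicator_of_mem ht]
      exact h t ht
    · simp only [Set.indicator_of_notMem ht]
      exact tendsto_const_nhds

lemma ae_ne_zero : ∀ᵐ t : Fin n → ℝ, ∀ i, t i ≠ 0 := by
  rw [ae_all_iff]
  intro i
  have := Measure.ae_eval_ne (fun _ : Fin n => (volume : Measure ℝ)) i 0
  exact this

/-- **Lemma 3.1.** For `0 > s₀ > max(-g, -1/max(o(S),2))`, provided `K` is supported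
in a sufficiently small neighborhood of the origin, on the line `Re(z) = s₀` one has
`‖T_z f‖_{L^p} ≤ C_{s₀} ‖f‖_{L^p}` for all `2 < p < ∞`, with `C_{s₀}` independent of
`z` and `p`. -/
theorem lemma_3_1
    (n m : ℕ) (hn : 0 < n) (hm : 0 < m)
    (grp : Fin n → Fin m) (hgrp : Function.Surjective grp)
    (l : Fin m → ℕ) (hl : ∀ k, l k = (Finset.univ.filter (fun i => grp i = k)).card)
    (a : Fin m → ℝ) (ha : ∀ k, 0 ≤ a k ∧ a k < l k)
    (S : (Fin n → ℝ) → ℝ) (c : (Fin n → ℕ) → ℝ)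
    (hSc : HasTaylorSeriesAtOrigin S c) (hc : c ≠ 0)
    (hS0 : S 0 = 0) (hS1 : fderiv ℝ S 0 = 0)
    (a₀ : ℝ) (d₀ : ℕ) (ha₀ : IsSublevelExponent grp a c a₀ d₀)
    (oS : ℕ) (hoS : newtonOrder c = (oS : ℕ∞))
    (g : ℝ) (hg : g = min a₀ (⨅ k, ((l k : ℝ) - a k)))
    (s₀ : ℝ) (hs₀neg : s₀ < 0) (hs₀ : max (-g) (-(1 / max (oS : ℝ) 2)) < s₀) :
    ∃ V ∈ 𝓝 (0 : Fin n → ℝ), ∀ K : (Fin n → ℝ) → ℝ,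
      Function.support K ⊆ V → KernelBounds grp a K →
      ∃ C : ℝ, 0 ≤ C ∧ ∀ z : ℂ, z.re = s₀ → ∀ p : ℝ, 2 < p →
        ∀ f : SchwartzMap (Fin (n+1) → ℝ) ℂ,
          eLpNorm (radonOpZ S K c z ⇑f) (ENNReal.ofReal p) volume ≤
            ENNReal.ofReal C * eLpNorm (⇑f) (ENNReal.ofReal p) volume := by
  obtain ⟨-, -, r₀, hr₀, H⟩ := ha₀
  obtain ⟨δ, hδ, hball⟩ := Metric.eventually_nhds_iff_ball.1 hSc
  set r : ℝ := min r₀ δ / 2 with hr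
  have hmin : 0 < min r₀ δ := lt_min hr₀ hδ
  have hr0 : 0 < r := by positivity
  have hrr : r < r₀ := by have := min_le_left r₀ δ; linarith
  have hrδ : r < δ := by have := min_le_right r₀ δ; linarith
  obtain ⟨_, B, -, -, HB⟩ := H r hr0 hrr
  have hs2 := max_lt_iff.1 hs₀
  have hsg : 0 < g + s₀ := by linarith [hs2.1]
  have hs1 : -1 < s₀ := by
    have : 1 / max (oS : ℝ) 2 ≤ 1 / 2 := one_div_le_one_div_of_le (by norm_num) (le_max_right _ _)
    linarith [hs2.2]
  have hga : g ≤ a₀ := hg ▸ min_le_left _ _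
  have hgl : ∀ k, g ≤ (l k : ℝ) - a k := fun k =>
    (hg ▸ min_le_right _ _ : g ≤ ⨅ k, ((l k : ℝ) - a k)).trans
      (ciInf_le (Set.finite_range _).bddBelow k)
  have hfin := majorant_lintegral hn grp hgrp l hl a ha c a₀ d₀ s₀ hs₀neg hs1
    (fun k => by linarith [hgl k]) (by linarith) r hr0 B (fun ε h0 h1 => (HB ε h0 h1).2)
  set V : Set (Fin n → ℝ) := {t | ∀ i, |t i| < r} with hV
  set W : Set (Fin n → ℝ) := {t | (∀ i, t i ≠ 0) ∧ ∀ i, |t i| < r} with hW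
  have hVball : V = Metric.ball 0 r := by
    ext t; simp [hV, pi_norm_lt_iff hr0]
  have hVo : IsOpen V := hVball ▸ Metric.isOpen_ball
  have hWm : MeasurableSet W := by
    have : W = (⋂ i, {t : Fin n → ℝ | t i ≠ 0}) ∩ V := by ext t; simp [hW, hV]
    rw [this]
    exact (MeasurableSet.iInter fun i =>
      (measurableSet_singleton (0:ℝ)).compl.preimage (measurable_pi_apply i)).inter hVo.measurableSet
  refine ⟨V, hVball ▸ Metric.ball_mem_nhds 0 hr0, fun K hK hKb => ?_⟩
  obtain ⟨-, CK, hCK⟩ := hKb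
  set G : (Fin n → ℝ) → ℝ≥0∞ := fun t => ENNReal.ofReal (majorant grp a c s₀ t) with hG
  have hGm : Measurable G := ENNReal.measurable_ofReal.comp (majorant_measurable grp a c s₀)
  set ν : Measure (Fin n → ℝ) := (volume.restrict W).withDensity G with hν
  have hνu : ν univ = ∫⁻ t in W, G t := by
    rw [hν, withDensity_apply _ MeasurableSet.univ, Measure.restrict_univ]
  have hνfin : ν univ < ∞ := hνu ▸ hfin
  have : IsFiniteMeasure ν := ⟨hνfin⟩
  set S' : (Fin n → ℝ) → ℝ := V.indicator S with hS'
  have hS'm : Measurable S' := indicator_measurable S c V hVo.measurableSet fun t ht =>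
    hball t (Metric.ball_subset_ball hrδ.le (hVball ▸ ht))
  set Γ : (Fin n → ℝ) → (Fin (n+1) → ℝ) := fun t => Fin.snoc (α := fun _ => ℝ) t (S' t) with hΓ
  have hΓm : Measurable Γ := by
    rw [measurable_pi_iff]
    intro j
    refine Fin.lastCases ?_ (fun i => ?_) j
    · simpa [hΓ] using hS'm
    · simpa [hΓ] using measurable_pi_apply i
  set D : ℝ := Real.exp (s₀ ^ 2) * |CK| with hD
  have hD0 : 0 ≤ D := by positivity
  refine ⟨D * (ν univ).toReal, by positivity, fun z hz p hp f => ?_⟩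
  rw [ENNReal.ofReal_mul hD0, ENNReal.ofReal_toReal hνfin.ne]
  refine minkowski_bound ν Γ hΓm f f.continuous p hp (ENNReal.ofReal D) _ fun x => ?_
  unfold radonOpZ
  rw [enorm_mul, hD, ENNReal.ofReal_mul (Real.exp_pos _).le, mul_assoc]
  refine mul_le_mul' ?_ ?_
  · rw [← ofReal_norm_eq_enorm, Complex.norm_exp]
    apply ENNReal.ofReal_le_ofReal
    apply Real.exp_le_exp.2
    rw [← hz, sq, Complex.mul_re]
    nlinarith [sq_nonneg z.im]
  refine (enorm_integral_le_lintegral_enorm _).trans ?_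
  have hfm : Measurable fun t => ‖f (x - Γ t)‖ₑ :=
    (f.continuous.measurable.comp (measurable_const.sub hΓm)).enorm
  rw [hν, lintegral_withDensity_eq_lintegral_mul _ hGm hfm, ← lintegral_const_mul _ (hGm.mul hfm),
    ← lintegral_indicator hWm]
  refine lintegral_mono_ae ?_
  filter_upwards [ae_ne_zero] with t ht
  by_cases htV : t ∈ V
  · have htW : t ∈ W := ⟨ht, htV⟩
    rw [Set.indicator_of_mem htW, enorm_mul]
    have hx : (fun j => x j - Fin.snoc (α := fun _ => ℝ) t (S t) j) = x - Γ t := by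
      ext j; simp [hΓ, hS', Set.indicator_of_mem htV]
    rw [hx, Pi.mul_apply, ← mul_assoc]
    refine mul_le_mul_left ?_ _
    rw [hG, ← ENNReal.ofReal_mul (abs_nonneg _), ← ofReal_norm_eq_enorm, norm_mul]
    apply ENNReal.ofReal_le_ofReal
    have h1 := norm_minFactor_cpow_le hn c z (hz ▸ hs₀neg) t
    rw [hz] at h1
    have h2 : ‖(K t : ℂ)‖ ≤ |CK| * kernelWeight grp a t := by
      rw [Complex.norm_real]
      exact ((hCK t ht).1).trans
        (mul_le_mul_of_nonneg_right (le_abs_self _) (kernelWeight_nonneg _ _ _))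
    calc _ ≤ ((∑ i, |t i| ^ s₀) + starFn c t ^ s₀) * (|CK| * kernelWeight grp a t) :=
          mul_le_mul h1 h2 (norm_nonneg _) ((norm_nonneg _).trans h1)
      _ = _ := by unfold majorant; ring
  · have : K t = 0 := by
      by_contra h; exact htV (hK h)
    simp [this]

end Paper
end
end
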